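/- arXiv:2312.06170 — 5 statements merged into one kernel-verified Lean document; each statement's English description precedes it below -/
import Mathlib

section
/- Let f : [−π,π] → ℝ be even and bounded, with a finite number of (weak) local maximum points, local minimum points, and discontinuity points, with essential range ER(f) = [inf_{[0,π]} f, sup_{[0,π]} f] and with (inf_{[0,π]} f, sup_{[0,π]} f) ⊆ f([0,π]). Then for every n there exist an asymptotically uniform grid {x_{i,n}}_{i=1,…,n} in [0,π], a real unitary n×n matrix V_n, and orderings of the eigenvalues of T_n(f) and H_n(f) such that: Y_n = V_n Δ_n V_nᵀ with Δ_n = diag_{i=1,…,n}((−1)^{i+1}); T_n(f) = V_n D_n V_nᵀ with D_n = diag_{i=1,…,n}(λ_i(T_n(f))); H_n(f) = V_n Δ_n D_n V_nᵀ; λ_i(H_n(f)) = (−1)^{i+1} λ_i(T_n(f)) for i = 1,…,n; and λ_i(T_n(f)) = f(x_{i,n}) for i = 1,…,n. -/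
/-!
Write `T = T_n(f)` and `Y = Y_n`. Since `f` is real and even, `T` is real symmetric and commutes
with `Y`, so the two matrices have a common orthonormal eigenbasis. It can be obtained from the
eigenvectors of `T + c Y` with `c` large; as `tr Y ∈ {0, 1}`, the eigenvectors can be ordered so that
they are alternately symmetric and skew-symmetric (`exists_adapted_basis`). What remains is to
permute the eigenvalues within each parity class so that they become samples of `f` on an
asymptotically uniform grid.

The extreme values of `f` are attained only at local extrema, hence only finitely often, so every
eigenvalue lies strictly between `inf f` and `sup f` (`lt_eig`, `eig_lt`) and is therefore a value of
`f` on `[0, π]`.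

For a unit eigenvector `v` with eigenvalue `l`, put `dens v x = |∑ₐ vₐ e^{iax}|²`, a probability
density. The integral `∫ (f - l)² dens v` equals `vᵀ (T_n(f²) - T_n(f)²) v`, and the sum of these
over the basis, `tr (T_n(f²) - T_n(f)²)`, is `o(n)` by Parseval's identity (`defect_small`). Also
`tr (Y T_n(g)) = o(n)` for bounded even `g` (`trace_flip_small`), so that the symmetric and the
skew-symmetric eigenvectors each carry half of the total mass. Together these bound from below, up
to `o(n)`, the number of eigenvalues of a given parity lying in an open set `U` by `n / 2` times the
normalized measure of `f⁻¹(U)` (`count_lower`).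

Divide `[0, π]` into `K` cells and remove the finitely many discontinuities and local extrema. On
what is left `f` is an open map (`isOpen_image`), so `count_lower` applies to the image of any union
of cells. If a set of grid points of one parity meets the cells in `C`, then the eigenvalues having a
preimage in a cell of `C` or in an adjacent one are at least as many: either these cells are all the
cells, or there is at least one more of them than in `C`. This is Hall's condition, and the marriage
theorem matches eigenvalues with grid points, moving each grid point by at most `2π / K`
(`hall_match`). Choosing for every `n` the largest `K ≤ n + 1` for which such a matching exists gives
the asymptotically uniform grid.
-/

open MeasureTheory Matrix Filter

/-- The `k`-th Fourier coefficient of `f : ℝ → ℂ` on `[-π, π]`. -/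
noncomputable def fourierCoef (f : ℝ → ℂ) (k : ℤ) : ℂ :=
  (1 / (2 * Real.pi)) * ∫ x in (-Real.pi)..Real.pi, f x * Complex.exp (-Complex.I * k * x)

/-- The `n × n` Toeplitz matrix generated by `f` (real version). -/
noncomputable def toeplitzR (f : ℝ → ℂ) (n : ℕ) : Matrix (Fin n) (Fin n) ℝ :=
  Matrix.of fun i j => (fourierCoef f ((i : ℤ) - (j : ℤ))).re

/-- The `n × n` exchange (flip) matrix `Y_n`. -/
def flipM (n : ℕ) : Matrix (Fin n) (Fin n) ℝ :=
  Matrix.of fun i j => if (i : ℕ) + (j : ℕ) = n - 1 then 1 else 0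

/-- Essential range of a real-valued function on a set. -/
def essRangeR (f : ℝ → ℝ) (s : Set ℝ) : Set ℝ :=
  {z : ℝ | ∀ ε > 0, 0 < volume {x ∈ s | |f x - z| < ε}}

namespace ToeplitzFlip

/-! ### Simultaneous diagonalization of a centrosymmetric matrix and the flip -/

lemma flipM_transpose (n : ℕ) : (flipM n)ᵀ = flipM n := by
  ext i j
  simp [flipM, add_comm]

lemma flipM_apply_rev (n : ℕ) (i j : Fin n) : flipM n i j = if j = i.rev then 1 else 0 := by
  have hi := i.2
  have hj := j.2
  simp only [flipM, Matrix.of_apply, Fin.ext_iff, Fin.val_rev]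
  congr 1
  apply propext
  omega

lemma flipM_mul_apply {n : ℕ} (A : Matrix (Fin n) (Fin n) ℝ) (i j : Fin n) :
    (flipM n * A) i j = A i.rev j := by
  simp [Matrix.mul_apply, flipM_apply_rev]

lemma mul_flipM_apply {n : ℕ} (A : Matrix (Fin n) (Fin n) ℝ) (i j : Fin n) :
    (A * flipM n) i j = A i j.rev := by
  rw [← flipM_transpose, ← Matrix.transpose_apply (A * _), Matrix.transpose_mul,
    Matrix.transpose_transpose, flipM_mul_apply, Matrix.transpose_apply]

lemma flipM_mul_self (n : ℕ) : flipM n * flipM n = 1 := by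
  ext i j
  rw [flipM_mul_apply, flipM_apply_rev, Matrix.one_apply]
  simp [eq_comm]

lemma trace_flipM (n : ℕ) : (flipM n).trace = ∑ i : Fin n, (-1 : ℝ) ^ (i : ℕ) := by
  rw [Fin.sum_univ_eq_sum_range (fun i => (-1 : ℝ) ^ i) n, neg_one_geom_sum, Matrix.trace]
  simp only [Matrix.diag_apply, flipM, Matrix.of_apply]
  split_ifs with h
  · apply Finset.sum_eq_zero
    intro i _
    have := i.2
    rw [if_neg]
    obtain ⟨k, hk⟩ := h
    omega
  · obtain ⟨k, hk⟩ := Nat.not_even_iff_odd.mp h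
    rw [Finset.sum_eq_single (⟨k, by omega⟩ : Fin n)]
    · rw [if_pos]
      simp only
      omega
    · intro b _ hb
      rw [if_neg]
      intro hc
      apply hb
      ext
      simp only
      omega
    · simp

lemma exists_perm_of_sum_eq {α : Type*} [Fintype α] [DecidableEq α] (s t : α → ℝ)
    (hs : ∀ a, s a = 1 ∨ s a = -1) (ht : ∀ a, t a = 1 ∨ t a = -1)
    (h : ∑ a, s a = ∑ a, t a) : ∃ σ : Equiv.Perm α, ∀ a, s (σ a) = t a := by
  have key : ∀ u : α → ℝ, (∀ a, u a = 1 ∨ u a = -1) →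
      ∑ a, u a = 2 * ((Finset.univ.filter fun a => u a = 1).card : ℝ) - Fintype.card α := by
    intro u hu
    have : ∀ a, u a = 2 * (if u a = 1 then 1 else 0) - 1 := by
      intro a
      rcases hu a with h | h <;> rw [h] <;> norm_num
    rw [Finset.sum_congr rfl fun a _ => this a, Finset.sum_sub_distrib, ← Finset.mul_sum]
    simp
  rw [key s hs, key t ht] at h
  have hc : (Finset.univ.filter fun a => t a = 1).card
      = (Finset.univ.filter fun a => s a = 1).card := by
    have : ((Finset.univ.filter fun a => t a = 1).card : ℝ)
      = (Finset.univ.filter fun a => s a = 1).card := by linarith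
    exact_mod_cast this
  have e : {a // t a = 1} ≃ {a // s a = 1} :=
    Fintype.equivOfCardEq (by rw [Fintype.card_subtype, Fintype.card_subtype, hc])
  refine ⟨e.extendSubtype, fun a => ?_⟩
  by_cases ha : t a = 1
  · rw [ha]
    exact e.extendSubtype_mem a ha
  · have h1 := e.extendSubtype_not_mem a ha
    rw [(ht a).resolve_left ha, (hs _).resolve_left h1]

/-- For `c` larger than the numerical radius of `T`, the eigenvalue of `T + c Y` on an eigenvector
lying in the `±1` eigenspace of `Y` has sign `±`, so that no eigenspace of `T + c Y` meets both:
every eigenvector of `T + c Y` is one of `Y`, and hence one of `T`. -/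
lemma eigenvector_split {n : ℕ} {T : Matrix (Fin n) (Fin n) ℝ}
    (hTY : T * flipM n = flipM n * T) {C : ℝ}
    (hC : ∀ v : Fin n → ℝ, |v ⬝ᵥ (T *ᵥ v)| ≤ C * (v ⬝ᵥ v)) {w : Fin n → ℝ} {μ : ℝ}
    (hw : (T + (C + 1) • flipM n) *ᵥ w = μ • w) :
    ∃ s l : ℝ, (s = 1 ∨ s = -1) ∧ flipM n *ᵥ w = s • w ∧ T *ᵥ w = l • w := by
  have hYY : flipM n *ᵥ (flipM n *ᵥ w) = w := by
    rw [Matrix.mulVec_mulVec, flipM_mul_self, Matrix.one_mulVec]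
  have hTw : T *ᵥ w = μ • w - (C + 1) • (flipM n *ᵥ w) := by
    rw [← hw, Matrix.add_mulVec, Matrix.smul_mulVec]; abel
  have hTYw : T *ᵥ (flipM n *ᵥ w) = μ • (flipM n *ᵥ w) - (C + 1) • w := by
    rw [Matrix.mulVec_mulVec, hTY, ← Matrix.mulVec_mulVec, hTw, Matrix.mulVec_sub,
      Matrix.mulVec_smul, Matrix.mulVec_smul, hYY]
  have aux : ∀ (p : Fin n → ℝ) (κ : ℝ), T *ᵥ p = κ • p → p ≠ 0 → |κ| ≤ C := by
    intro p κ hp hp0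
    have h1 := hC p
    have hpos : 0 < p ⬝ᵥ p := by
      refine lt_of_le_of_ne ?_ (Ne.symm (mt dotProduct_self_eq_zero.mp hp0))
      exact Finset.sum_nonneg fun i _ => mul_self_nonneg _
    rw [hp, dotProduct_smul, smul_eq_mul, abs_mul, abs_of_pos hpos] at h1
    exact le_of_mul_le_mul_right h1 hpos
  have hp : T *ᵥ (w + flipM n *ᵥ w) = (μ - (C + 1)) • (w + flipM n *ᵥ w) := by
    rw [Matrix.mulVec_add, hTw, hTYw]; module
  have hm : T *ᵥ (w - flipM n *ᵥ w) = (μ + (C + 1)) • (w - flipM n *ᵥ w) := by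
    rw [Matrix.mulVec_sub, hTw, hTYw]; module
  by_cases h1 : w - flipM n *ᵥ w = 0
  · have h2 : flipM n *ᵥ w = w := (sub_eq_zero.mp h1).symm
    refine ⟨1, μ - (C + 1), Or.inl rfl, by simpa using h2, ?_⟩
    rw [hTw, h2]; module
  · by_cases h2 : w + flipM n *ᵥ w = 0
    · have h3 : flipM n *ᵥ w = -w := (neg_eq_of_add_eq_zero_right h2).symm
      refine ⟨-1, μ + (C + 1), Or.inr rfl, by simpa using h3, ?_⟩
      rw [hTw, h3]; module
    · have e1 := abs_le.mp (aux _ _ hp h2)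
      have e2 := abs_le.mp (aux _ _ hm h1)
      linarith [e1.1, e2.2]

lemma mul_diagonal_of_mulVec {n : ℕ} {A W : Matrix (Fin n) (Fin n) ℝ} {l : Fin n → ℝ}
    (h : ∀ j, A *ᵥ (fun i => W i j) = l j • (fun i => W i j)) : A * W = W * diagonal l := by
  ext i j
  rw [Matrix.mul_diagonal]
  have := congrFun (h j) i
  simp only [Pi.smul_apply, smul_eq_mul] at this
  rw [mul_comm, ← this]
  rfl

lemma conj_diagonal_perm {n : ℕ} (W : Matrix (Fin n) (Fin n) ℝ) (d : Fin n → ℝ)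
    (σ : Equiv.Perm (Fin n)) : W * diagonal d * Wᵀ
      = (W.submatrix id σ) * diagonal (d ∘ σ) * (W.submatrix id σ)ᵀ := by
  ext i j
  rw [Matrix.mul_apply, Matrix.mul_apply]
  simp only [Matrix.mul_diagonal, Matrix.transpose_apply, Matrix.submatrix_apply, id,
    Function.comp]
  exact (Equiv.sum_comp σ (fun x => W i x * d x * W j x)).symm

lemma submatrix_perm_orth {n : ℕ} (W : Matrix (Fin n) (Fin n) ℝ) (σ : Equiv.Perm (Fin n)) :
    (W.submatrix id σ) * (W.submatrix id σ)ᵀ = W * Wᵀ := by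
  rw [Matrix.transpose_submatrix, Matrix.submatrix_mul_equiv]
  simp

/-- A symmetric matrix commuting with the flip has an orthonormal eigenbasis which is alternately
symmetric and skew-symmetric. -/
lemma exists_adapted_basis {n : ℕ} {T : Matrix (Fin n) (Fin n) ℝ} (hT : Tᵀ = T)
    (hTY : T * flipM n = flipM n * T) {C : ℝ}
    (hC : ∀ v : Fin n → ℝ, |v ⬝ᵥ (T *ᵥ v)| ≤ C * (v ⬝ᵥ v)) :
    ∃ (V : Matrix (Fin n) (Fin n) ℝ) (l : Fin n → ℝ), V * Vᵀ = 1 ∧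
      flipM n = V * diagonal (fun i : Fin n => (-1 : ℝ) ^ (i : ℕ)) * Vᵀ ∧
      T = V * diagonal l * Vᵀ := by
  have hA : (T + (C + 1) • flipM n).IsHermitian := by
    rw [Matrix.IsHermitian, Matrix.conjTranspose_eq_transpose_of_trivial, Matrix.transpose_add,
      Matrix.transpose_smul, hT, flipM_transpose]
  set W : Matrix (Fin n) (Fin n) ℝ := hA.eigenvectorUnitary.1
  have hWW : W * Wᵀ = 1 := by
    have := Unitary.coe_mul_star_self hA.eigenvectorUnitary
    rwa [Unitary.coe_star, Matrix.star_eq_conjTranspose,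
      Matrix.conjTranspose_eq_transpose_of_trivial] at this
  have hWW' : Wᵀ * W = 1 := mul_eq_one_comm.mp hWW
  have hcol : ∀ j, ∃ s l : ℝ, (s = 1 ∨ s = -1) ∧
      flipM n *ᵥ (fun i => W i j) = s • (fun i => W i j) ∧
      T *ᵥ (fun i => W i j) = l • (fun i => W i j) := by
    intro j
    apply eigenvector_split hTY hC (μ := hA.eigenvalues j)
    have := hA.mulVec_eigenvectorBasis j
    exact this
  choose s l hs hYs hTl using hcol
  have hY : flipM n = W * diagonal s * Wᵀ := by
    rw [← mul_diagonal_of_mulVec hYs, Matrix.mul_assoc, hWW, Matrix.mul_one]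
  have hTd : T = W * diagonal l * Wᵀ := by
    rw [← mul_diagonal_of_mulVec hTl, Matrix.mul_assoc, hWW, Matrix.mul_one]
  have htr : ∑ j, s j = ∑ i : Fin n, (-1 : ℝ) ^ (i : ℕ) := by
    rw [← trace_flipM, hY, Matrix.trace_mul_cycle, hWW', Matrix.one_mul, Matrix.trace_diagonal]
  obtain ⟨σ, hσ⟩ := exists_perm_of_sum_eq s _ hs (fun i => neg_one_pow_eq_or ℝ (i : ℕ)) htr
  refine ⟨W.submatrix id σ, l ∘ σ, ?_, ?_, ?_⟩
  · rw [submatrix_perm_orth, hWW]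
  · conv_lhs => rw [hY, conj_diagonal_perm W s σ]
    congr 3
    exact funext hσ
  · rw [← conj_diagonal_perm, ← hTd]

/-! ### Cosine coefficients and the quadratic form of a Toeplitz matrix -/

/-- Lebesgue measure on `(-π, π]`, normalized to be a probability measure. -/
noncomputable def circ : Measure ℝ :=
  ENNReal.ofReal (1 / (2 * Real.pi)) • volume.restrict (Set.Ioc (-Real.pi) Real.pi)

instance : IsProbabilityMeasure circ := by
  constructor
  have := Real.pi_pos
  rw [circ, Measure.smul_apply, Measure.restrict_apply_univ, Real.volume_Ioc, smul_eq_mul,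
    ← ENNReal.ofReal_mul (by positivity)]
  rw [show 1 / (2 * Real.pi) * (Real.pi - -Real.pi) = 1 by field_simp; ring]
  simp

lemma integral_circ {E : Type*} [NormedAddCommGroup E] [NormedSpace ℝ E] (g : ℝ → E) :
    ∫ x, g x ∂circ = (1 / (2 * Real.pi)) • ∫ x in (-Real.pi)..Real.pi, g x := by
  have := Real.pi_pos
  rw [circ, integral_smul_measure, intervalIntegral.integral_of_le (by linarith),
    ENNReal.toReal_ofReal (by positivity)]

/-- The class of symbols in use: even functions, almost everywhere measurable and
essentially bounded on `[-π, π]`. -/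
structure Sym (g : ℝ → ℝ) : Prop where
  even : ∀ x, g (-x) = g x
  meas : AEStronglyMeasurable g circ
  bdd : ∃ C, ∀ᵐ x ∂circ, |g x| ≤ C

/-- The `m`-th Fourier coefficient of an even function. -/
noncomputable def cosCoef (g : ℝ → ℝ) (m : ℤ) : ℝ := ∫ x, g x * Real.cos (m * x) ∂circ

lemma Sym.integrable_mul {g : ℝ → ℝ} (hg : Sym g) {h : ℝ → ℝ} (hh : Integrable h circ) :
    Integrable (fun x => g x * h x) circ := by
  obtain ⟨C, hC⟩ := hg.bdd
  exact hh.bdd_mul hg.meas (c := C) (by simpa [Real.norm_eq_abs] using hC)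

lemma integrable_of_continuous_bdd {h : ℝ → ℝ} (hc : Continuous h) {C : ℝ} (hC : ∀ x, |h x| ≤ C) :
    Integrable h circ :=
  Integrable.of_bound hc.aestronglyMeasurable C
    (ae_of_all _ fun x => by simpa [Real.norm_eq_abs] using hC x)

lemma Sym.integrable {g : ℝ → ℝ} (hg : Sym g) : Integrable g circ := by
  simpa using hg.integrable_mul (integrable_const (1 : ℝ))

lemma integrable_cos (m : ℤ) : Integrable (fun x => Real.cos (m * x)) circ :=
  integrable_of_continuous_bdd (by fun_prop) (C := 1) fun x => Real.abs_cos_le_one _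

lemma integrable_sin (m : ℤ) : Integrable (fun x => Real.sin (m * x)) circ :=
  integrable_of_continuous_bdd (by fun_prop) (C := 1) fun x => Real.abs_sin_le_one _

lemma integral_circ_odd {h : ℝ → ℝ} (hh : ∀ x, h (-x) = - h x) : ∫ x, h x ∂circ = 0 := by
  rw [integral_circ]
  have h1 : ∫ x in (-Real.pi)..Real.pi, h (-x) = ∫ x in (-Real.pi)..Real.pi, h x := by
    rw [intervalIntegral.integral_comp_neg, neg_neg]
  simp only [hh, intervalIntegral.integral_neg] at h1
  rw [show ∫ x in (-Real.pi)..Real.pi, h x = 0 by linarith, smul_zero]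

lemma integral_exp_eq {g : ℝ → ℝ} (hg : Sym g) (m : ℤ) :
    ∫ x, (g x : ℂ) * Complex.exp (-Complex.I * m * x) ∂circ = (cosCoef g m : ℂ) := by
  have h1 : ∀ x : ℝ, (g x : ℂ) * Complex.exp (-Complex.I * m * x)
      = ((g x * Real.cos (m * x) : ℝ) : ℂ) - ((g x * Real.sin (m * x) : ℝ) : ℂ) * Complex.I := by
    intro x
    rw [show -Complex.I * m * x = ((-(m * x) : ℝ) : ℂ) * Complex.I by push_cast; ring,
      Complex.exp_mul_I, ← Complex.ofReal_cos, ← Complex.ofReal_sin, Real.cos_neg, Real.sin_neg]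
    push_cast
    ring
  simp_rw [h1]
  rw [integral_sub, integral_mul_const, integral_complex_ofReal, integral_complex_ofReal,
    integral_circ_odd (h := fun x => g x * Real.sin (m * x))]
  · simp [cosCoef]
  · intro x
    rw [hg.even, mul_neg, Real.sin_neg, mul_neg]
  · exact (hg.integrable_mul (integrable_cos m)).ofReal
  · exact (hg.integrable_mul (integrable_sin m)).ofReal.mul_const _

lemma fourierCoef_eq {g : ℝ → ℝ} (hg : Sym g) (m : ℤ) :
    fourierCoef (fun t => (g t : ℂ)) m = (cosCoef g m : ℂ) := by
  rw [← integral_exp_eq hg, integral_circ, fourierCoef, Complex.real_smul]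
  push_cast
  rfl

/-- Parseval's identity for an even function. -/
lemma hasSum_cosCoef_sq {g : ℝ → ℝ} (hg : Sym g) :
    HasSum (fun m : ℤ => cosCoef g m ^ 2) (∫ x, g x ^ 2 ∂circ) := by
  have hpi := Real.pi_pos
  have hab : -Real.pi < Real.pi := by linarith
  have hcne : ENNReal.ofReal (1 / (2 * Real.pi)) ≠ 0 := by
    rw [Ne, ENNReal.ofReal_eq_zero, not_le]; positivity
  have hac : volume.restrict (Set.Ioc (-Real.pi) Real.pi) ≪ circ :=
    Measure.absolutelyContinuous_smul hcne
  obtain ⟨C, hC⟩ := hg.bdd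
  have hL : MemLp (fun x => (g x : ℂ)) 2 (volume.restrict (Set.Ioc (-Real.pi) Real.pi)) := by
    refine MemLp.of_bound ?_ C ?_
    · exact Complex.continuous_ofReal.comp_aestronglyMeasurable (hg.meas.mono_ac hac)
    · filter_upwards [hac.ae_le hC] with x hx
      simpa using hx
  have h := hasSum_sq_fourierCoeffOn hab hL
  have e1 : ∀ m : ℤ, fourierCoeffOn hab (fun x => (g x : ℂ)) m = (cosCoef g m : ℂ) := by
    intro m
    rw [fourierCoeffOn_eq_integral, ← integral_exp_eq hg, integral_circ]
    congr 1
    · congr 1; ring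
    · apply intervalIntegral.integral_congr
      intro x _
      simp only [smul_eq_mul]
      rw [fourier_coe_apply, mul_comm]
      congr 2
      have : (Real.pi : ℂ) ≠ 0 := by exact_mod_cast hpi.ne'
      push_cast
      field_simp
      ring
  have e2 : (Real.pi - -Real.pi)⁻¹ • ∫ x in (-Real.pi)..Real.pi, ‖(g x : ℂ)‖ ^ 2
      = ∫ x, g x ^ 2 ∂circ := by
    rw [integral_circ]
    congr 1
    · rw [one_div]; congr 1; ring
    · simp
  rw [e2] at h
  convert h using 2 with m
  rw [e1]
  simp

/-- The Toeplitz matrix of an even symbol. -/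
noncomputable def toep (g : ℝ → ℝ) (n : ℕ) : Matrix (Fin n) (Fin n) ℝ :=
  Matrix.of fun i j => cosCoef g ((i : ℤ) - (j : ℤ))

lemma toeplitzR_eq {g : ℝ → ℝ} (hg : Sym g) (n : ℕ) :
    toeplitzR (fun t => (g t : ℂ)) n = toep g n := by
  ext i j
  simp [toeplitzR, toep, fourierCoef_eq hg]

lemma cosCoef_neg (g : ℝ → ℝ) (m : ℤ) : cosCoef g (-m) = cosCoef g m := by
  simp [cosCoef]

lemma toep_transpose (g : ℝ → ℝ) (n : ℕ) : (toep g n)ᵀ = toep g n := by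
  ext i j
  simp only [toep, Matrix.transpose_apply, Matrix.of_apply]
  rw [← cosCoef_neg, neg_sub]

lemma toep_mul_flipM (g : ℝ → ℝ) (n : ℕ) : toep g n * flipM n = flipM n * toep g n := by
  ext i j
  have hi := i.2
  have hj := j.2
  rw [mul_flipM_apply, flipM_mul_apply]
  simp only [toep, Matrix.of_apply, Fin.val_rev]
  rw [← cosCoef_neg]
  congr 1
  omega

/-- `|∑ₐ vₐ e^{iax}|²`, the density against which `vᵀ T_n(g) v` averages `g`. -/
noncomputable def dens {n : ℕ} (v : Fin n → ℝ) (x : ℝ) : ℝ :=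
  (∑ a : Fin n, v a * Real.cos ((a : ℕ) * x)) ^ 2 + (∑ a : Fin n, v a * Real.sin ((a : ℕ) * x)) ^ 2

lemma dens_nonneg {n : ℕ} (v : Fin n → ℝ) (x : ℝ) : 0 ≤ dens v x := by
  unfold dens; positivity

lemma dens_eq {n : ℕ} (v : Fin n → ℝ) (x : ℝ) :
    dens v x = ∑ a : Fin n, ∑ b : Fin n,
      v a * v b * Real.cos ((((a : ℕ) : ℤ) - ((b : ℕ) : ℤ) : ℤ) * x) := by
  rw [dens, sq, sq, Finset.sum_mul_sum, Finset.sum_mul_sum, ← Finset.sum_add_distrib]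
  refine Finset.sum_congr rfl fun a _ => ?_
  rw [← Finset.sum_add_distrib]
  refine Finset.sum_congr rfl fun b _ => ?_
  push_cast
  rw [sub_mul, Real.cos_sub]
  ring

lemma continuous_dens {n : ℕ} (v : Fin n → ℝ) : Continuous (dens v) := by
  unfold dens; fun_prop

lemma integrable_dens {n : ℕ} (v : Fin n → ℝ) : Integrable (dens v) circ := by
  rw [show dens v = _ from funext (dens_eq v)]
  exact integrable_finsetSum _ fun a _ => integrable_finsetSum _ fun b _ =>
    (integrable_cos _).const_mul _

lemma quad_eq {g : ℝ → ℝ} (hg : Sym g) {n : ℕ} (v : Fin n → ℝ) :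
    v ⬝ᵥ (toep g n *ᵥ v) = ∫ x, g x * dens v x ∂circ := by
  have h1 : ∀ x, g x * dens v x = ∑ a : Fin n, ∑ b : Fin n,
      v a * v b * (g x * Real.cos ((((a : ℕ) : ℤ) - ((b : ℕ) : ℤ) : ℤ) * x)) := by
    intro x
    rw [dens_eq, Finset.mul_sum]
    refine Finset.sum_congr rfl fun a _ => ?_
    rw [Finset.mul_sum]
    exact Finset.sum_congr rfl fun b _ => by ring
  simp_rw [h1]
  rw [integral_finsetSum _ fun a _ => integrable_finsetSum _ fun b _ =>
    (hg.integrable_mul (integrable_cos _)).const_mul _]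
  simp only [dotProduct, Matrix.mulVec]
  refine Finset.sum_congr rfl fun a _ => ?_
  rw [integral_finsetSum _ fun b _ => (hg.integrable_mul (integrable_cos _)).const_mul _,
    Finset.mul_sum]
  refine Finset.sum_congr rfl fun b _ => ?_
  rw [integral_const_mul]
  simp only [toep, Matrix.of_apply, cosCoef]
  ring

lemma sym_const (c : ℝ) : Sym (fun _ => c) :=
  ⟨fun _ => rfl, aestronglyMeasurable_const, |c|, ae_of_all _ fun _ => le_rfl⟩

lemma integral_cos_circ (m : ℤ) (hm : m ≠ 0) : ∫ x, Real.cos (m * x) ∂circ = 0 := by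
  have hm' : (m : ℝ) ≠ 0 := by exact_mod_cast hm
  rw [integral_circ, intervalIntegral.integral_comp_mul_left (fun x => Real.cos x) hm',
    integral_cos, mul_neg, Real.sin_neg, Real.sin_int_mul_pi]
  simp

lemma toep_one (n : ℕ) : toep (fun _ => 1) n = 1 := by
  ext i j
  simp only [toep, Matrix.of_apply, cosCoef, one_mul]
  by_cases h : i = j
  · subst h
    simp
  · rw [Matrix.one_apply_ne h, integral_cos_circ]
    have : (i : ℕ) ≠ j := fun h' => h (Fin.ext h')
    omega

lemma integral_dens {n : ℕ} (v : Fin n → ℝ) : ∫ x, dens v x ∂circ = v ⬝ᵥ v := by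
  have := quad_eq (sym_const 1) v
  rw [toep_one, Matrix.one_mulVec] at this
  simpa using this.symm

lemma quad_bound {g : ℝ → ℝ} (hg : Sym g) {C : ℝ} (hC : ∀ᵐ x ∂circ, |g x| ≤ C) {n : ℕ}
    (v : Fin n → ℝ) : |v ⬝ᵥ (toep g n *ᵥ v)| ≤ C * (v ⬝ᵥ v) := by
  rw [quad_eq hg, ← integral_dens, ← integral_const_mul, ← Real.norm_eq_abs]
  refine norm_integral_le_of_norm_le ((integrable_dens v).const_mul C) ?_
  filter_upwards [hC] with x hx
  rw [Real.norm_eq_abs, abs_mul, abs_of_nonneg (dens_nonneg v x)]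
  exact mul_le_mul_of_nonneg_right hx (dens_nonneg v x)

/-! ### Asymptotic distribution of the eigenvalues of each parity -/

lemma abs_le_add_sq_div {t η : ℝ} (hη : 0 < η) : |t| ≤ η + t ^ 2 / η := by
  rw [← sub_le_iff_le_add', le_div_iff₀ hη, ← sq_abs t]
  nlinarith [sq_nonneg (|t| - η), abs_nonneg t]

/-- `tr (T_n(g²) - T_n(g)²)`, as a sum over the matrix entries. -/
noncomputable def defect (g : ℝ → ℝ) (n : ℕ) : ℝ :=
  n * (∫ x, g x ^ 2 ∂circ) - ∑ a : Fin n, ∑ b : Fin n, toep g n a b ^ 2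

lemma sum_row_eq (h : ℤ → ℝ) (n : ℕ) (a : ℤ) :
    ∑ b : Fin n, h (a - ((b : ℕ) : ℤ))
      = ∑ m ∈ Finset.univ.image (fun b : Fin n => a - ((b : ℕ) : ℤ)), h m := by
  rw [Finset.sum_image]
  intro b _ b' _ hb
  ext
  simp only at hb
  omega

/-- Apart from boundedly many rows near the two ends, each row of `T_n(g)` carries almost the whole
`ℓ²` mass of the Fourier coefficients. -/
lemma defect_small {g : ℝ → ℝ} (hg : Sym g) {δ : ℝ} (hδ : 0 < δ) :
    ∀ᶠ n : ℕ in atTop, defect g n ≤ δ * n := by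
  set I := ∫ x, g x ^ 2 ∂circ with hI
  have hsum := hasSum_cosCoef_sq hg
  have hI0 : 0 ≤ I := integral_nonneg fun x => sq_nonneg _
  obtain ⟨s, hs⟩ := ((hsum.eventually_const_lt (show I - δ / 2 < I by linarith)).exists)
  obtain ⟨M, hM⟩ : ∃ M : ℕ, ∀ m ∈ s, m.natAbs ≤ M :=
    ⟨s.sup Int.natAbs, fun m hm => Finset.le_sup (f := Int.natAbs) hm⟩
  have hev : ∀ᶠ n : ℕ in atTop, 2 * M * I / (δ / 2) ≤ (n : ℝ) :=
    tendsto_natCast_atTop_atTop.eventually_ge_atTop _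
  filter_upwards [hev] with n hn
  rw [div_le_iff₀ (by positivity)] at hn
  set bad : Finset (Fin n) := Finset.univ.filter fun a => (a : ℕ) < M ∨ n ≤ (a : ℕ) + M with hbad
  have hcard : (bad.card : ℝ) ≤ 2 * M := by
    have : bad.card ≤ (Finset.range M ∪ Finset.Ico (n - M) n).card := by
      apply Finset.card_le_card_of_injOn (fun a : Fin n => (a : ℕ))
      · intro a ha
        have h2 := a.2
        simp only [hbad, Finset.coe_filter, Finset.mem_univ, true_and, Set.mem_ofPred_eq] at ha
        simp only [Finset.coe_union, Set.mem_union, Finset.mem_coe, Finset.mem_range,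
          Finset.mem_Ico]
        omega
      · intro a _ b _ hab
        exact Fin.ext hab
    have h2 := this.trans (Finset.card_union_le _ _)
    rw [Finset.card_range, Nat.card_Ico] at h2
    have h3 : bad.card ≤ 2 * M := by omega
    exact_mod_cast h3
  have hrow : ∀ a : Fin n, I - ∑ b : Fin n, toep g n a b ^ 2
      ≤ δ / 2 + (if a ∈ bad then I else 0) := by
    intro a
    split_ifs with ha
    · have : 0 ≤ ∑ b : Fin n, toep g n a b ^ 2 := Finset.sum_nonneg fun b _ => sq_nonneg _
      linarith
    · simp only [toep, Matrix.of_apply]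
      rw [sum_row_eq (fun m => cosCoef g m ^ 2)]
      have hsub : s ⊆ Finset.univ.image (fun b : Fin n => ((a : ℕ) : ℤ) - ((b : ℕ) : ℤ)) := by
        intro m hm
        have hmM := hM m hm
        simp only [hbad, Finset.mem_filter, Finset.mem_univ, true_and, not_or, not_lt, not_le] at ha
        rw [Finset.mem_image]
        refine ⟨⟨(((a : ℕ) : ℤ) - m).toNat, by omega⟩, Finset.mem_univ _, ?_⟩
        simp only
        omega
      have := Finset.sum_le_sum_of_subset_of_nonneg hsub
        (fun m _ _ => sq_nonneg (cosCoef g m))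
      linarith
  have htot := Finset.sum_le_sum fun a (_ : a ∈ Finset.univ) => hrow a
  rw [Finset.sum_sub_distrib, Finset.sum_add_distrib] at htot
  simp only [Finset.sum_const, Finset.card_univ, Fintype.card_fin, nsmul_eq_mul,
    Finset.sum_ite_mem, Finset.univ_inter] at htot
  have h4 : (bad.card : ℝ) * I ≤ 2 * M * I := mul_le_mul_of_nonneg_right hcard hI0
  unfold defect
  linarith

lemma trace_flip_small {g : ℝ → ℝ} (hg : Sym g) {δ : ℝ} (hδ : 0 < δ) :
    ∀ᶠ n : ℕ in atTop, |(flipM n * toep g n).trace| ≤ δ * n := by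
  set I := ∫ x, g x ^ 2 ∂circ with hI
  have hsum := hasSum_cosCoef_sq hg
  have hev : ∀ᶠ n : ℕ in atTop, I / (δ / 2) / (δ / 2) ≤ (n : ℝ) :=
    tendsto_natCast_atTop_atTop.eventually_ge_atTop _
  filter_upwards [hev] with n hn
  rw [div_le_iff₀ (by positivity)] at hn
  have h1 : (flipM n * toep g n).trace
      = ∑ i : Fin n, cosCoef g (((n : ℤ) - 1) - 2 * ((i : ℕ) : ℤ)) := by
    rw [Matrix.trace]
    refine Finset.sum_congr rfl fun i _ => ?_
    have := i.2
    rw [Matrix.diag_apply, flipM_mul_apply]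
    simp only [toep, Matrix.of_apply, Fin.val_rev]
    congr 1
    omega
  have h2 : ∑ i : Fin n, cosCoef g (((n : ℤ) - 1) - 2 * ((i : ℕ) : ℤ)) ^ 2 ≤ I := by
    have : ∑ i : Fin n, cosCoef g (((n : ℤ) - 1) - 2 * ((i : ℕ) : ℤ)) ^ 2
        = ∑ m ∈ Finset.univ.image (fun i : Fin n => ((n : ℤ) - 1) - 2 * ((i : ℕ) : ℤ)),
          cosCoef g m ^ 2 := by
      rw [Finset.sum_image]
      intro b _ b' _ hb
      ext
      simp only at hb
      omega
    rw [this]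
    exact sum_le_hasSum _ (fun m _ => sq_nonneg _) hsum
  rw [h1]
  calc |∑ i : Fin n, cosCoef g (((n : ℤ) - 1) - 2 * ((i : ℕ) : ℤ))|
      ≤ ∑ i : Fin n, |cosCoef g (((n : ℤ) - 1) - 2 * ((i : ℕ) : ℤ))| :=
        Finset.abs_sum_le_sum_abs _ _
    _ ≤ ∑ i : Fin n, (δ / 2 + cosCoef g (((n : ℤ) - 1) - 2 * ((i : ℕ) : ℤ)) ^ 2 / (δ / 2)) :=
        Finset.sum_le_sum fun i _ => abs_le_add_sq_div (by positivity)
    _ = n * (δ / 2) + (∑ i : Fin n, cosCoef g (((n : ℤ) - 1) - 2 * ((i : ℕ) : ℤ)) ^ 2) / (δ / 2) := by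
        rw [Finset.sum_add_distrib, Finset.sum_div]
        simp
    _ ≤ n * (δ / 2) + I / (δ / 2) := by gcongr
    _ ≤ δ * n := by linarith

/-- `V` is an orthogonal matrix whose columns are eigenvectors of `T`, with eigenvalues `l`, and are
alternately symmetric and skew-symmetric. -/
structure Adapted {n : ℕ} (T V : Matrix (Fin n) (Fin n) ℝ) (l : Fin n → ℝ) : Prop where
  orth : V * Vᵀ = 1
  flip : flipM n = V * diagonal (fun i : Fin n => (-1 : ℝ) ^ (i : ℕ)) * Vᵀ
  eig : T = V * diagonal l * Vᵀ

section adapted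

variable {n : ℕ} {T V : Matrix (Fin n) (Fin n) ℝ} {l : Fin n → ℝ}

lemma Adapted.orth' (h : Adapted T V l) : Vᵀ * V = 1 := mul_eq_one_comm.mp h.orth

lemma Adapted.dot_self (h : Adapted T V l) (j : Fin n) : V.col j ⬝ᵥ V.col j = 1 := by
  have := congrFun (congrFun h.orth' j) j
  rwa [Matrix.one_apply_eq, Matrix.mul_apply] at this

lemma quad_col (M V : Matrix (Fin n) (Fin n) ℝ) (j : Fin n) :
    V.col j ⬝ᵥ (M *ᵥ V.col j) = (Vᵀ * M * V) j j := by
  rw [Matrix.mul_assoc, Matrix.mul_apply]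
  rfl

lemma Adapted.quad_self (h : Adapted T V l) (j : Fin n) : V.col j ⬝ᵥ (T *ᵥ V.col j) = l j := by
  rw [quad_col, h.eig]
  have : Vᵀ * (V * diagonal l * Vᵀ) * V = (Vᵀ * V) * diagonal l * (Vᵀ * V) := by
    simp only [Matrix.mul_assoc]
  rw [this, h.orth']
  simp

lemma sum_quad_col (M V : Matrix (Fin n) (Fin n) ℝ) (w : Fin n → ℝ) :
    ∑ j, w j * (V.col j ⬝ᵥ (M *ᵥ V.col j)) = (V * diagonal w * Vᵀ * M).trace := by
  rw [Matrix.trace_mul_comm, ← Matrix.mul_assoc, Matrix.trace_mul_comm, ← Matrix.mul_assoc,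
    ← Matrix.mul_assoc, Matrix.trace]
  refine Finset.sum_congr rfl fun j _ => ?_
  rw [Matrix.diag_apply, Matrix.mul_diagonal, quad_col, mul_comm]

lemma Adapted.sum_sq (h : Adapted T V l) (hT : Tᵀ = T) :
    ∑ j, l j ^ 2 = ∑ a, ∑ b, T a b ^ 2 := by
  have h1 : (T * T).trace = ∑ a, ∑ b, T a b ^ 2 := by
    rw [Matrix.trace]
    refine Finset.sum_congr rfl fun a _ => ?_
    rw [Matrix.diag_apply, Matrix.mul_apply]
    refine Finset.sum_congr rfl fun b _ => ?_
    rw [sq, ← Matrix.transpose_apply T a b, hT]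
  have h2 := sum_quad_col T V l
  rw [← h.eig, h1] at h2
  rw [← h2]
  exact Finset.sum_congr rfl fun j _ => by rw [h.quad_self, sq]

lemma Adapted.sum_parity (h : Adapted T V l) (M : Matrix (Fin n) (Fin n) ℝ) (s : ℝ) :
    ∑ j : Fin n, ((1 + s * (-1) ^ (j : ℕ)) / 2) * (V.col j ⬝ᵥ (M *ᵥ V.col j))
      = (M.trace + s * (flipM n * M).trace) / 2 := by
  have h1 := sum_quad_col M V fun _ => 1
  have h2 := sum_quad_col M V fun j => (-1) ^ (j : ℕ)
  rw [← h.flip] at h2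
  rw [Matrix.diagonal_one, Matrix.mul_one, h.orth, Matrix.one_mul] at h1
  rw [← h1, ← h2, Finset.mul_sum, ← Finset.sum_add_distrib, Finset.sum_div]
  exact Finset.sum_congr rfl fun j _ => by ring

end adapted

lemma toep_trace (g : ℝ → ℝ) (n : ℕ) : (toep g n).trace = n * ∫ x, g x ∂circ := by
  simp [Matrix.trace, toep, cosCoef]

lemma Sym.sq {g : ℝ → ℝ} (hg : Sym g) : Sym (fun x => g x ^ 2) := by
  obtain ⟨C, hC⟩ := hg.bdd
  refine ⟨fun x => by rw [hg.even], hg.meas.pow 2, C ^ 2, ?_⟩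
  filter_upwards [hC] with x hx
  rw [abs_pow]
  exact pow_le_pow_left₀ (abs_nonneg _) hx 2

lemma Sym.comp {f : ℝ → ℝ} (hf : Sym f) {F : ℝ → ℝ} (hF : Continuous F) (hF0 : ∀ y, |F y| ≤ 1) :
    Sym (fun x => F (f x)) :=
  ⟨fun x => by rw [hf.even], hF.comp_aestronglyMeasurable hf.meas, 1, ae_of_all _ fun x => hF0 _⟩

/-- The eigenvector equation gives `∫ (f - l)² dens = vᵀ (T_n(f²) - T_n(f)²) v`. -/
lemma integral_sub_sq_dens {f : ℝ → ℝ} (hf : Sym f) {n : ℕ} {V : Matrix (Fin n) (Fin n) ℝ}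
    {l : Fin n → ℝ} (h : Adapted (toep f n) V l) (j : Fin n) :
    Integrable (fun x => (f x - l j) ^ 2 * dens (V.col j) x) circ ∧
    ∫ x, (f x - l j) ^ 2 * dens (V.col j) x ∂circ
      = V.col j ⬝ᵥ (toep (fun x => f x ^ 2) n *ᵥ V.col j) - l j ^ 2 := by
  have e : ∀ x, (f x - l j) ^ 2 * dens (V.col j) x
      = f x ^ 2 * dens (V.col j) x - (2 * l j) * (f x * dens (V.col j) x)
        + l j ^ 2 * dens (V.col j) x := fun x => by ring
  have i0 := integrable_dens (V.col j)
  have i1 := hf.integrable_mul i0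
  have i2 := hf.sq.integrable_mul i0
  simp_rw [e]
  have i3 : Integrable (fun x => f x ^ 2 * dens (V.col j) x
      - (2 * l j) * (f x * dens (V.col j) x)) circ := i2.sub (i1.const_mul _)
  refine ⟨i3.add (i0.const_mul _), ?_⟩
  rw [integral_add i3 (i0.const_mul _), integral_sub i2 (i1.const_mul _),
    integral_const_mul, integral_const_mul, integral_dens, ← quad_eq hf.sq, ← quad_eq hf,
    h.quad_self, h.dot_self]
  ring

/-- Comparison of an eigenvalue statistic over one parity class with the matching average of the
symbol; the error is governed by `defect`, through `|t| ≤ η + t² / η`. -/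
lemma sum_parity_lower {f : ℝ → ℝ} (hf : Sym f) {n : ℕ} {V : Matrix (Fin n) (Fin n) ℝ}
    {l : Fin n → ℝ} (h : Adapted (toep f n) V l) {F : ℝ → ℝ} (hFc : Continuous F)
    (hF0 : ∀ y, |F y| ≤ 1) {L : ℝ} (hL : 0 ≤ L) (hF : ∀ y z, F y ≤ F z + L * |y - z|)
    {η : ℝ} (hη : 0 < η) {s : ℝ} (hs : s = 1 ∨ s = -1) :
    (n * (∫ x, F (f x) ∂circ) + s * (flipM n * toep (fun x => F (f x)) n).trace) / 2
        - L * (n * η + defect f n / η)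
      ≤ ∑ j : Fin n, ((1 + s * (-1) ^ (j : ℕ)) / 2) * F (l j) := by
  have hFf := hf.comp hFc hF0
  have hcol : ∀ j, V.col j ⬝ᵥ (toep (fun x => F (f x)) n *ᵥ V.col j)
      ≤ F (l j) + L * (η + (V.col j ⬝ᵥ (toep (fun x => f x ^ 2) n *ᵥ V.col j) - l j ^ 2) / η) := by
    intro j
    obtain ⟨i1, e1⟩ := integral_sub_sq_dens hf h j
    have i0 := integrable_dens (V.col j)
    have e0 := integral_dens (V.col j)
    rw [h.dot_self] at e0
    have step : ∫ x, F (f x) * dens (V.col j) x ∂circ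
        ≤ ∫ x, ((F (l j) + L * η) * dens (V.col j) x
          + L / η * ((f x - l j) ^ 2 * dens (V.col j) x)) ∂circ := by
      refine integral_mono (hFf.integrable_mul i0)
        ((i0.const_mul _).add (i1.const_mul _)) fun x => ?_
      have h1 := hF (f x) (l j)
      have h2 := mul_le_mul_of_nonneg_left (abs_le_add_sq_div (t := f x - l j) hη) hL
      have h3 : F (f x) ≤ F (l j) + L * η + L / η * (f x - l j) ^ 2 := by
        have : L * (η + (f x - l j) ^ 2 / η) = L * η + L / η * (f x - l j) ^ 2 := by ring
        linarith
      calc F (f x) * dens (V.col j) x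
          ≤ (F (l j) + L * η + L / η * (f x - l j) ^ 2) * dens (V.col j) x :=
            mul_le_mul_of_nonneg_right h3 (dens_nonneg _ _)
        _ = _ := by ring
    rw [integral_add (i0.const_mul _) (i1.const_mul _), integral_const_mul, integral_const_mul,
      e0, e1, ← quad_eq hFf] at step
    refine step.trans (le_of_eq ?_)
    ring
  have hw : ∀ j : Fin n, (1 + s * (-1) ^ (j : ℕ)) / 2 = 0 ∨ (1 + s * (-1) ^ (j : ℕ)) / 2 = 1 := by
    intro j
    rcases neg_one_pow_eq_or ℝ (j : ℕ) with hj | hj <;> rcases hs with h | h <;>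
      rw [hj, h] <;> norm_num
  have hε : ∀ j, 0 ≤ L * (η + (V.col j ⬝ᵥ (toep (fun x => f x ^ 2) n *ᵥ V.col j) - l j ^ 2) / η) := by
    intro j
    rw [← (integral_sub_sq_dens hf h j).2]
    have : 0 ≤ ∫ x, (f x - l j) ^ 2 * dens (V.col j) x ∂circ :=
      integral_nonneg fun x => mul_nonneg (sq_nonneg _) (dens_nonneg _ _)
    positivity
  have hsum : ∑ j : Fin n, ((1 + s * (-1) ^ (j : ℕ)) / 2)
        * (V.col j ⬝ᵥ (toep (fun x => F (f x)) n *ᵥ V.col j))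
      ≤ ∑ j : Fin n, (((1 + s * (-1) ^ (j : ℕ)) / 2) * F (l j)
        + L * (η + (V.col j ⬝ᵥ (toep (fun x => f x ^ 2) n *ᵥ V.col j) - l j ^ 2) / η)) := by
    refine Finset.sum_le_sum fun j _ => ?_
    rcases hw j with h0 | h0 <;> rw [h0]
    · simpa using hε j
    · simpa using hcol j
  rw [h.sum_parity, toep_trace, Finset.sum_add_distrib, ← Finset.mul_sum, Finset.sum_add_distrib,
    ← Finset.sum_div, Finset.sum_sub_distrib, h.sum_sq (toep_transpose f n)] at hsum
  have htr := sum_quad_col (toep (fun x => f x ^ 2) n) V fun _ => 1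
  rw [Matrix.diagonal_one, Matrix.mul_one, h.orth, Matrix.one_mul, toep_trace] at htr
  simp only [one_mul] at htr
  rw [htr] at hsum
  simp only [Finset.sum_const, Finset.card_univ, Fintype.card_fin, nsmul_eq_mul] at hsum
  unfold defect
  linarith

open Classical in
/-- A lower bound on the number of eigenvalues of each parity in an open set, uniform in the choice
of the adapted basis. -/
lemma count_lower {f : ℝ → ℝ} (hf : Sym f) {U : Set ℝ} (hU : IsOpen U) (hUc : Uᶜ.Nonempty)
    {δ : ℝ} (hδ : 0 < δ) :
    ∀ᶠ n : ℕ in atTop, ∀ (V : Matrix (Fin n) (Fin n) ℝ) (l : Fin n → ℝ),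
      Adapted (toep f n) V l → ∀ s : ℝ, s = 1 ∨ s = -1 →
      (n : ℝ) * (circ.real (f ⁻¹' U) / 2 - δ)
        ≤ ((Finset.univ.filter fun j : Fin n => (-1 : ℝ) ^ (j : ℕ) = s ∧ l j ∈ U).card : ℝ) := by
  -- `F M` is Lipschitz and increases to the indicator of `U`
  set F : ℕ → ℝ → ℝ := fun M y => min 1 (M * Metric.infDist y Uᶜ) with hFdef
  have hF01 : ∀ M y, 0 ≤ F M y ∧ F M y ≤ 1 := fun M y =>
    ⟨le_min zero_le_one (mul_nonneg (Nat.cast_nonneg _) Metric.infDist_nonneg), min_le_left _ _⟩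
  have hFabs : ∀ M y, |F M y| ≤ 1 := fun M y => abs_le.mpr ⟨by linarith [(hF01 M y).1], (hF01 M y).2⟩
  have hFc : ∀ M, Continuous (F M) := fun M =>
    continuous_const.min (continuous_const.mul (Metric.continuous_infDist_pt _))
  have hFL : ∀ (M : ℕ) y z, F M y ≤ F M z + M * |y - z| := by
    intro M y z
    have h1 : Metric.infDist y Uᶜ ≤ Metric.infDist z Uᶜ + dist y z :=
      Metric.infDist_le_infDist_add_dist
    rw [Real.dist_eq] at h1
    have hM : (0 : ℝ) ≤ M := Nat.cast_nonneg _
    have h2 := mul_le_mul_of_nonneg_left h1 hM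
    have h3 : 0 ≤ (M : ℝ) * |y - z| := by positivity
    simp only [hFdef]
    rcases min_cases (1 : ℝ) (M * Metric.infDist z Uᶜ) with ⟨e, _⟩ | ⟨e, _⟩ <;> rw [e]
    · linarith [min_le_left (1 : ℝ) (M * Metric.infDist y Uᶜ)]
    · linarith [min_le_right (1 : ℝ) (M * Metric.infDist y Uᶜ)]
  have hF_out : ∀ M, ∀ y ∉ U, F M y = 0 := by
    intro M y hy
    simp [hFdef, Metric.infDist_zero_of_mem (show y ∈ Uᶜ from hy)]
  have hlim : Tendsto (fun M => ∫ x, F M (f x) ∂circ) atTop (nhds (circ.real (f ⁻¹' U))) := by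
    have hnull : NullMeasurableSet (f ⁻¹' U) circ :=
      hf.meas.aemeasurable.nullMeasurableSet_preimage hU.measurableSet
    have : circ.real (f ⁻¹' U) = ∫ x, (f ⁻¹' U).indicator (fun _ => (1 : ℝ)) x ∂circ := by
      rw [integral_indicator₀ hnull]
      simp [Measure.real]
    rw [this]
    refine tendsto_integral_of_dominated_convergence (fun _ => (1 : ℝ))
      (fun M => (hFc M).comp_aestronglyMeasurable hf.meas) (integrable_const _)
      (fun M => ae_of_all _ fun x => by simpa [Real.norm_eq_abs] using hFabs M (f x))
      (ae_of_all _ fun x => ?_)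
    by_cases hx : f x ∈ U
    · rw [Set.indicator_of_mem (show x ∈ f ⁻¹' U from hx)]
      have hpos : 0 < Metric.infDist (f x) Uᶜ :=
        (hU.isClosed_compl.notMem_iff_infDist_pos hUc).mp fun h => h hx
      refine tendsto_const_nhds.congr' ?_
      have h1 : ∀ᶠ M : ℕ in atTop, 1 / Metric.infDist (f x) Uᶜ ≤ (M : ℝ) :=
        tendsto_natCast_atTop_atTop.eventually_ge_atTop _
      filter_upwards [h1] with M hM
      rw [div_le_iff₀ hpos] at hM
      simp only [hFdef]
      exact (min_eq_left hM).symm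
    · rw [Set.indicator_of_notMem (show x ∉ f ⁻¹' U from hx)]
      simp only [hF_out _ _ hx]
      exact tendsto_const_nhds
  obtain ⟨M, hM⟩ := (hlim.eventually_const_lt
    (show circ.real (f ⁻¹' U) - δ < circ.real (f ⁻¹' U) by linarith)).exists
  set η : ℝ := δ / (8 * (M + 1)) with hη
  have hη0 : 0 < η := by positivity
  have hMη : M * η ≤ δ / 8 := by
    rw [hη, mul_div_assoc', div_le_div_iff₀ (by positivity) (by positivity)]
    nlinarith
  filter_upwards [trace_flip_small (hf.comp (hFc M) (hFabs M)) (show 0 < δ / 4 by positivity),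
    defect_small hf (show 0 < η ^ 2 by positivity)] with n h1 h2 V l hA s hs
  have key := sum_parity_lower hf hA (hFc M) (hFabs M) (Nat.cast_nonneg M) (hFL M) hη0 hs
  have h3 : defect f n / η ≤ η * n := by
    rw [div_le_iff₀ hη0]; linarith
  have hn0 : (0 : ℝ) ≤ n := Nat.cast_nonneg n
  have h4 : M * (n * η + defect f n / η) ≤ δ / 4 * n := by
    calc M * (n * η + defect f n / η) ≤ M * (n * η + η * n) := by gcongr
      _ = 2 * (M * η) * n := by ring
      _ ≤ 2 * (δ / 8) * n := by gcongr
      _ = _ := by ring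
  have h5 : -(δ / 4 * n) ≤ s * (flipM n * toep (fun x => F M (f x)) n).trace := by
    have := abs_le.mp h1
    rcases hs with h | h <;> rw [h] <;> linarith [this.1, this.2]
  have h6 : ∑ j : Fin n, ((1 + s * (-1) ^ (j : ℕ)) / 2) * F M (l j)
      ≤ ((Finset.univ.filter fun j : Fin n => (-1 : ℝ) ^ (j : ℕ) = s ∧ l j ∈ U).card : ℝ) := by
    rw [Finset.card_filter, Nat.cast_sum]
    refine Finset.sum_le_sum fun j _ => ?_
    by_cases hlU : l j ∈ U
    · have := (hF01 M (l j)).2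
      rcases neg_one_pow_eq_or ℝ (j : ℕ) with hj | hj <;> rcases hs with h | h <;>
        rw [hj, h] <;> norm_num [hlU] <;> linarith
    · rw [hF_out M _ hlU]
      simp [hlU]
  have h7 := mul_le_mul_of_nonneg_left hM.le hn0
  have h8 : 0 ≤ δ * n := by positivity
  nlinarith

/-! ### Consequences of the regularity of the symbol -/

lemma ae_circ_iff {p : ℝ → Prop} :
    (∀ᵐ x ∂circ, p x) ↔ ∀ᵐ x ∂(volume.restrict (Set.Ioc (-Real.pi) Real.pi)), p x := by
  have hpi := Real.pi_pos
  have hcne : ENNReal.ofReal (1 / (2 * Real.pi)) ≠ 0 := by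
    rw [Ne, ENNReal.ofReal_eq_zero, not_le]; positivity
  rw [circ, Measure.ae_ennreal_smul_measure_iff hcne]

lemma ae_circ_of_finite {p : ℝ → Prop}
    (h : {x ∈ Set.Icc (-Real.pi) Real.pi | ¬ p x}.Finite) : ∀ᵐ x ∂circ, p x := by
  rw [ae_circ_iff]
  have h0 : ∀ᵐ x ∂(volume.restrict (Set.Ioc (-Real.pi) Real.pi)),
      x ∉ {x ∈ Set.Icc (-Real.pi) Real.pi | ¬ p x} :=
    ae_restrict_of_ae (measure_eq_zero_iff_ae_notMem.mp (h.measure_zero volume))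
  filter_upwards [h0, ae_restrict_mem measurableSet_Ioc] with x hx hx'
  by_contra hp
  exact hx ⟨Set.Ioc_subset_Icc_self hx', hp⟩

lemma sym_of_finite_disc {f : ℝ → ℝ} (hf_even : ∀ x, f (-x) = f x)
    (hf_bdd : ∃ C : ℝ, ∀ x ∈ Set.Icc (-Real.pi) Real.pi, |f x| ≤ C)
    (hdisc : {x ∈ Set.Icc (-Real.pi) Real.pi |
      ¬ ContinuousWithinAt f (Set.Icc (-Real.pi) Real.pi) x}.Finite) : Sym f := by
  refine ⟨hf_even, ?_, ?_⟩
  · set D := {x ∈ Set.Icc (-Real.pi) Real.pi |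
      ¬ ContinuousWithinAt f (Set.Icc (-Real.pi) Real.pi) x} with hD
    have hc : ContinuousOn f (Set.Icc (-Real.pi) Real.pi \ D) := by
      intro x hx
      have : ContinuousWithinAt f (Set.Icc (-Real.pi) Real.pi) x := by
        by_contra h
        exact hx.2 ⟨hx.1, h⟩
      exact this.mono Set.sdiff_subset
    have h1 := hc.aestronglyMeasurable (μ := volume)
      (measurableSet_Icc.diff hdisc.measurableSet)
    have h2 : (Set.Icc (-Real.pi) Real.pi \ D : Set ℝ) =ᵐ[volume] Set.Ioc (-Real.pi) Real.pi :=
      (sdiff_null_ae_eq_self (hdisc.measure_zero volume)).trans Ioc_ae_eq_Icc.symm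
    rw [Measure.restrict_congr_set h2] at h1
    exact h1.smul_measure _
  · obtain ⟨C, hC⟩ := hf_bdd
    refine ⟨C, ae_circ_iff.mpr ?_⟩
    filter_upwards [ae_restrict_mem measurableSet_Ioc] with x hx
    exact hC x (Set.Ioc_subset_Icc_self hx)

lemma integral_mul_dens_pos {h : ℝ → ℝ} (hh : Sym h) (hpos : ∀ᵐ x ∂circ, 0 < h x) {n : ℕ}
    {v : Fin n → ℝ} (hv : v ⬝ᵥ v = 1) : 0 < ∫ x, h x * dens v x ∂circ := by
  have hnn : 0 ≤ᵐ[circ] fun x => h x * dens v x := by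
    filter_upwards [hpos] with x hx
    exact mul_nonneg hx.le (dens_nonneg v x)
  refine lt_of_le_of_ne (integral_nonneg_of_ae hnn) fun h0 => ?_
  have h1 := (integral_eq_zero_iff_of_nonneg_ae hnn (hh.integrable_mul (integrable_dens v))).mp
    h0.symm
  have h2 : ∫ x, dens v x ∂circ = 0 := by
    apply integral_eq_zero_of_ae
    filter_upwards [h1, hpos] with x hx hx'
    exact (mul_eq_zero.mp hx).resolve_left hx'.ne'
  rw [integral_dens, hv] at h2
  exact one_ne_zero h2

lemma eig_lt {f : ℝ → ℝ} (hf : Sym f) {n : ℕ} {V : Matrix (Fin n) (Fin n) ℝ} {l : Fin n → ℝ}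
    (h : Adapted (toep f n) V l) {b : ℝ} (hb : ∀ᵐ x ∂circ, f x < b) (j : Fin n) : l j < b := by
  have hS : Sym (fun x => b - f x) := by
    obtain ⟨C, hC⟩ := hf.bdd
    refine ⟨fun x => by rw [hf.even], aestronglyMeasurable_const.sub hf.meas, |b| + C, ?_⟩
    filter_upwards [hC] with x hx
    exact (abs_sub _ _).trans (by linarith)
  have := integral_mul_dens_pos hS (by filter_upwards [hb] with x hx; linarith) (h.dot_self j)
  simp only [sub_mul] at this
  rw [integral_sub ((integrable_dens _).const_mul _) (hf.integrable_mul (integrable_dens _)),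
    integral_const_mul, integral_dens, h.dot_self, ← quad_eq hf, h.quad_self] at this
  linarith

lemma lt_eig {f : ℝ → ℝ} (hf : Sym f) {n : ℕ} {V : Matrix (Fin n) (Fin n) ℝ} {l : Fin n → ℝ}
    (h : Adapted (toep f n) V l) {a : ℝ} (ha : ∀ᵐ x ∂circ, a < f x) (j : Fin n) : a < l j := by
  have hS : Sym (fun x => f x - a) := by
    obtain ⟨C, hC⟩ := hf.bdd
    refine ⟨fun x => by rw [hf.even], hf.meas.sub aestronglyMeasurable_const, C + |a|, ?_⟩
    filter_upwards [hC] with x hx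
    exact (abs_sub _ _).trans (by linarith)
  have := integral_mul_dens_pos hS (by filter_upwards [ha] with x hx; linarith) (h.dot_self j)
  simp only [sub_mul] at this
  rw [integral_sub (hf.integrable_mul (integrable_dens _)) ((integrable_dens _).const_mul _),
    integral_const_mul, integral_dens, h.dot_self, ← quad_eq hf, h.quad_self] at this
  linarith

/-- Away from discontinuities and local extrema the symbol is an open map, by the intermediate
value theorem. -/
lemma isOpen_image {f : ℝ → ℝ} {O : Set ℝ} (hO : IsOpen O) (hc : ∀ x ∈ O, ContinuousAt f x)
    (hmax : ∀ x ∈ O, ¬ IsLocalMax f x) (hmin : ∀ x ∈ O, ¬ IsLocalMin f x) :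
    IsOpen (f '' O) := by
  rw [isOpen_iff_mem_nhds]
  rintro _ ⟨x, hx, rfl⟩
  obtain ⟨r, hr, hball⟩ := Metric.isOpen_iff.mp hO x hx
  have hconn : (f '' Metric.ball x r).OrdConnected := by
    apply IsPreconnected.ordConnected
    apply IsPreconnected.image
    · exact (convex_ball x r).isPreconnected
    · exact fun y hy => (hc y (hball hy)).continuousWithinAt
  have h1 : ∃ y ∈ Metric.ball x r, f x < f y := by
    by_contra! h
    exact hmax x hx (Filter.mem_of_superset (Metric.ball_mem_nhds x hr) h)
  have h2 : ∃ y ∈ Metric.ball x r, f y < f x := by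
    by_contra! h
    exact hmin x hx (Filter.mem_of_superset (Metric.ball_mem_nhds x hr) h)
  obtain ⟨y, hy, hxy⟩ := h1
  obtain ⟨z, hz, hxz⟩ := h2
  have h3 : Set.Icc (f z) (f y) ⊆ f '' Metric.ball x r :=
    hconn.out ⟨z, hz, rfl⟩ ⟨y, hy, rfl⟩
  exact Filter.mem_of_superset (Icc_mem_nhds hxz hxy) (h3.trans (Set.image_mono hball))

/-- The `k`-th of `K` equal open subintervals of `[0, π]`, with the exceptional set `S` removed. -/
def cell (S : Set ℝ) (K k : ℕ) : Set ℝ :=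
  Set.Ioo (k * Real.pi / K) ((k + 1) * Real.pi / K) \ S

lemma cell_subset_Ioo (S : Set ℝ) {K k : ℕ} (hk : k < K) : cell S K k ⊆ Set.Ioo 0 Real.pi := by
  rintro x ⟨⟨h1, h2⟩, -⟩
  have hpi := Real.pi_pos
  have hK : (0 : ℝ) < K := by exact_mod_cast (Nat.zero_le k).trans_lt hk
  have hk' : (k : ℝ) + 1 ≤ K := by exact_mod_cast hk
  refine ⟨lt_of_le_of_lt (by positivity) h1, h2.trans_le ?_⟩
  rw [div_le_iff₀ hK, mul_comm Real.pi]
  exact mul_le_mul_of_nonneg_right hk' hpi.le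

lemma circ_abs_Ioo {a b : ℝ} (ha : 0 ≤ a) (hab : a ≤ b) (hb : b ≤ Real.pi) :
    circ.real ((fun x => |x|) ⁻¹' Set.Ioo a b) = (b - a) / Real.pi := by
  have hpi := Real.pi_pos
  have h1 : (fun x : ℝ => |x|) ⁻¹' Set.Ioo a b = Set.Ioo a b ∪ Set.Ioo (-b) (-a) := by
    ext x
    simp only [Set.mem_preimage, Set.mem_Ioo, Set.mem_union]
    rcases abs_cases x with ⟨h, h'⟩ | ⟨h, h'⟩ <;> rw [h] <;> constructor
    · exact fun hx => Or.inl hx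
    · rintro (hx | hx)
      · exact hx
      · exfalso; linarith [hx.2]
    · exact fun hx => Or.inr ⟨by linarith [hx.2], by linarith [hx.1]⟩
    · rintro (hx | hx)
      · exfalso; linarith [hx.1]
      · exact ⟨by linarith [hx.2], by linarith [hx.1]⟩
  have h2 : Set.Ioo a b ∪ Set.Ioo (-b) (-a) ⊆ Set.Ioc (-Real.pi) Real.pi := by
    rintro x (hx | hx)
    · exact ⟨by linarith [hx.1], by linarith [hx.2]⟩
    · exact ⟨by linarith [hx.1], by linarith [hx.2]⟩
  have h3 : Disjoint (Set.Ioo a b) (Set.Ioo (-b) (-a)) := by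
    rw [Set.disjoint_left]
    intro x hx hx'
    linarith [hx.1, hx'.2]
  rw [h1, Measure.real, circ, Measure.smul_apply, Measure.restrict_apply
    (measurableSet_Ioo.union measurableSet_Ioo), Set.inter_eq_left.mpr h2,
    measure_union h3 measurableSet_Ioo, Real.volume_Ioo, Real.volume_Ioo, smul_eq_mul,
    ← ENNReal.ofReal_add (by linarith) (by linarith), ← ENNReal.ofReal_mul (by positivity),
    ENNReal.toReal_ofReal (mul_nonneg (by positivity) (by linarith))]
  field_simp
  ring

lemma circ_abs_cell {S : Set ℝ} (hS : S.Finite) {K k : ℕ} (hk : k < K) :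
    circ.real ((fun x => |x|) ⁻¹' cell S K k) = 1 / K := by
  have hpi := Real.pi_pos
  have hK : (0 : ℝ) < K := by exact_mod_cast (Nat.zero_le k).trans_lt hk
  have hk' : (k : ℝ) + 1 ≤ K := by exact_mod_cast hk
  have hfin : ((fun x : ℝ => |x|) ⁻¹' S).Finite := by
    refine (hS.union (hS.image Neg.neg)).subset fun x hx => ?_
    rcases abs_choice x with h | h
    · exact Or.inl (by rw [← h]; exact hx)
    · exact Or.inr ⟨-x, by rw [← h]; exact hx, neg_neg x⟩
  have h0 : circ ((fun x : ℝ => |x|) ⁻¹' S) = 0 := by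
    have : volume.restrict (Set.Ioc (-Real.pi) Real.pi) ((fun x : ℝ => |x|) ⁻¹' S) = 0 :=
      hfin.measure_zero _
    rw [circ, Measure.smul_apply, this, smul_zero]
  rw [cell, Set.preimage_sdiff, measureReal_def, measure_sdiff_null h0, ← measureReal_def,
    circ_abs_Ioo (by positivity)]
  · field_simp
    ring
  · gcongr; linarith
  · rw [div_le_iff₀ hK, mul_comm Real.pi]
    exact mul_le_mul_of_nonneg_right hk' hpi.le

lemma circ_cells {f : ℝ → ℝ} (hf_even : ∀ x, f (-x) = f x) {S : Set ℝ} (hS : S.Finite) {K : ℕ}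
    {C : Finset ℕ} (hC : C ⊆ Finset.range K) :
    (C.card : ℝ) / K ≤ circ.real (f ⁻¹' (f '' ⋃ k ∈ C, cell S K k)) := by
  have habs : ∀ x, f |x| = f x := by
    intro x
    rcases abs_choice x with h | h <;> rw [h]
    exact hf_even x
  have hsub : ⋃ k ∈ C, (fun x => |x|) ⁻¹' cell S K k ⊆ f ⁻¹' (f '' ⋃ k ∈ C, cell S K k) := by
    intro x hx
    simp only [Set.mem_iUnion, Set.mem_preimage] at hx
    obtain ⟨k, hk, hx⟩ := hx
    exact ⟨|x|, Set.mem_biUnion (Finset.mem_coe.mpr hk) hx, habs x⟩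
  have hdisj : Set.PairwiseDisjoint (C : Set ℕ) fun k => (fun x : ℝ => |x|) ⁻¹' cell S K k := by
    have hlt : ∀ a b : ℕ, a < b → Disjoint (cell S K a) (cell S K b) := by
      intro a b hab
      rw [Set.disjoint_left]
      rintro x ⟨⟨-, hx⟩, -⟩ ⟨⟨hx', -⟩, -⟩
      have : ((a : ℝ) + 1) * Real.pi / K ≤ b * Real.pi / K := by
        have hab' : (a : ℝ) + 1 ≤ b := by exact_mod_cast hab
        have := Real.pi_pos
        gcongr
      linarith
    intro a _ b _ hab
    apply Disjoint.preimage
    rcases lt_or_gt_of_ne hab with h | h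
    · exact hlt a b h
    · exact (hlt b a h).symm
  have hmeas : ∀ k ∈ C, MeasurableSet ((fun x : ℝ => |x|) ⁻¹' cell S K k) := fun k _ =>
    (measurableSet_Ioo.diff hS.measurableSet).preimage continuous_abs.measurable
  refine le_trans (le_of_eq ?_) (measureReal_mono hsub (measure_ne_top _ _))
  rw [measureReal_biUnion_finset hdisj hmeas,
    Finset.sum_congr rfl fun k hk => circ_abs_cell hS (Finset.mem_range.mp (hC hk))]
  simp [div_eq_mul_inv]

/-! ### Matching eigenvalues with grid points -/

lemma mod_two_eq_of_neg_one_pow_eq {i j : ℕ} (h : (-1 : ℝ) ^ i = (-1) ^ j) : i % 2 = j % 2 := by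
  rcases Nat.even_or_odd i with hi | hi <;> rcases Nat.even_or_odd j with hj | hj
  · rw [Nat.even_iff.mp hi, Nat.even_iff.mp hj]
  · rw [hi.neg_one_pow, hj.neg_one_pow] at h; norm_num at h
  · rw [hi.neg_one_pow, hj.neg_one_pow] at h; norm_num at h
  · rw [Nat.odd_iff.mp hi, Nat.odd_iff.mp hj]

lemma card_parity_le {A : Finset ℕ} {K n : ℕ} (hK : 0 < K)
    (hpar : ∀ i ∈ A, ∀ j ∈ A, i % 2 = j % 2) (hd : ∀ i ∈ A, ∀ j ∈ A, K * i ≤ K * j + (n + 1)) :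
    (A.card : ℝ) ≤ (n + 1) / (2 * K) + 1 := by
  have hcard : A.card ≤ (n + 1) / (2 * K) + 1 := by
    rcases A.eq_empty_or_nonempty with rfl | hne
    · simp
    · have hm := A.min'_mem hne
      set m := A.min' hne
      rw [← Finset.card_range ((n + 1) / (2 * K) + 1)]
      apply Finset.card_le_card_of_injOn (fun i => (i - m) / 2)
      · intro i hi
        have h1 : m ≤ i := A.min'_le i hi
        have h2 := hd i hi m hm
        obtain ⟨t, rfl⟩ := Nat.exists_eq_add_of_le h1
        rw [Finset.mem_coe, Finset.mem_range, Nat.lt_succ_iff, Nat.le_div_iff_mul_le (by positivity)]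
        show (m + t - m) / 2 * (2 * K) ≤ n + 1
        rw [Nat.add_sub_cancel_left]
        have h3 : K * t ≤ n + 1 := by nlinarith
        have h4 : t / 2 * 2 ≤ t := Nat.div_mul_le_self t 2
        nlinarith
      · intro i hi j hj hij
        have h1 : m ≤ i := A.min'_le i hi
        have h2 : m ≤ j := A.min'_le j hj
        have h3 := hpar i hi m hm
        have h4 := hpar j hj m hm
        simp only at hij
        omega
  calc (A.card : ℝ) ≤ (((n + 1) / (2 * K) + 1 : ℕ) : ℝ) := by exact_mod_cast hcard
    _ = (((n + 1) / (2 * K) : ℕ) : ℝ) + 1 := by push_cast; rfl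
    _ ≤ ((n + 1 : ℕ) : ℝ) / ((2 * K : ℕ) : ℝ) + 1 := by gcongr; exact Nat.cast_div_le
    _ = _ := by push_cast; rfl

/-- The elements of `{0, …, K - 1}` at distance at most `1` from `C`. -/
def nbhd (K : ℕ) (C : Finset ℕ) : Finset ℕ :=
  (Finset.range K).filter fun k => ∃ c ∈ C, k ≤ c + 1 ∧ c ≤ k + 1

lemma card_lt_nbhd {K : ℕ} {C : Finset ℕ} (hC : C ⊆ Finset.range K) (hne : C.Nonempty)
    (h : nbhd K C ≠ Finset.range K) : C.card < (nbhd K C).card := by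
  have hsub : C ⊆ nbhd K C := fun c hc =>
    Finset.mem_filter.mpr ⟨hC hc, c, hc, by omega, by omega⟩
  refine Finset.card_lt_card (lt_of_le_of_ne hsub fun heq => h ?_)
  have hstep : ∀ c ∈ C, ∀ k < K, k ≤ c + 1 → c ≤ k + 1 → k ∈ C := fun c hc k hk h1 h2 => by
    rw [heq]
    exact Finset.mem_filter.mpr ⟨Finset.mem_range.mpr hk, c, hc, h1, h2⟩
  obtain ⟨c, hc⟩ := hne
  have hcK := Finset.mem_range.mp (hC hc)
  have hup : ∀ d, c + d < K → c + d ∈ C := by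
    intro d
    induction d with
    | zero => exact fun _ => hc
    | succ d ih => exact fun hd => hstep _ (ih (by omega)) _ hd (by omega) (by omega)
  have hdown : ∀ d, d ≤ c → c - d ∈ C := by
    intro d
    induction d with
    | zero => exact fun _ => hc
    | succ d ih => exact fun hd => hstep _ (ih (by omega)) _ (by omega) (by omega) (by omega)
  rw [← heq]
  refine Finset.Subset.antisymm hC fun k hk => ?_
  rw [Finset.mem_range] at hk
  rcases le_total c k with h1 | h1
  · have := hup (k - c) (by omega)
    rwa [show c + (k - c) = k by omega] at this
  · have := hdown (c - k) (by omega)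
    rwa [show c - (c - k) = k by omega] at this

/-- The uniform grid in `(0, π)`. -/
noncomputable def theta {n : ℕ} (i : Fin n) : ℝ := ((i : ℕ) + 1) * Real.pi / (n + 1)

lemma theta_mem {n : ℕ} (i : Fin n) : theta i ∈ Set.Icc 0 Real.pi := by
  have hpi := Real.pi_pos
  have hi : ((i : ℕ) : ℝ) + 1 ≤ n := by exact_mod_cast i.2
  unfold theta
  refine ⟨by positivity, ?_⟩
  rw [div_le_iff₀ (by positivity)]
  nlinarith

/-- The index of the cell of length `π / K` containing `theta i`. -/
def cellOf (K : ℕ) {n : ℕ} (i : Fin n) : ℕ := K * ((i : ℕ) + 1) / (n + 1)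

lemma cellOf_spec (K : ℕ) {n : ℕ} (i : Fin n) :
    cellOf K i * (n + 1) ≤ K * ((i : ℕ) + 1) ∧ K * ((i : ℕ) + 1) < (cellOf K i + 1) * (n + 1) :=
  ⟨Nat.div_mul_le_self _ _, by
    rw [mul_comm (cellOf K i + 1)]; exact Nat.lt_mul_div_succ _ (Nat.succ_pos n)⟩

lemma cellOf_lt {K : ℕ} (hK : 0 < K) {n : ℕ} (i : Fin n) : cellOf K i < K := by
  rw [cellOf, Nat.div_lt_iff_lt_mul (Nat.succ_pos n)]
  have := i.2
  exact Nat.mul_lt_mul_of_pos_left (by omega) hK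

lemma theta_cellOf {K : ℕ} (hK : 0 < K) {n : ℕ} (i : Fin n) :
    theta i ∈ Set.Icc (cellOf K i * Real.pi / K) ((cellOf K i + 1) * Real.pi / K) := by
  have hpi := Real.pi_pos
  have hK' : (0 : ℝ) < K := by exact_mod_cast hK
  obtain ⟨h1, h2⟩ := cellOf_spec K i
  have h1' : (cellOf K i : ℝ) * (n + 1) ≤ K * ((i : ℕ) + 1) := by exact_mod_cast h1
  have h2' : (K : ℝ) * ((i : ℕ) + 1) ≤ (cellOf K i + 1) * (n + 1) := by exact_mod_cast h2.le
  unfold theta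
  constructor
  · rw [div_le_div_iff₀ hK' (by positivity)]
    nlinarith
  · rw [div_le_div_iff₀ (by positivity) hK']
    nlinarith

lemma abs_sub_le_of_cells {K k c : ℕ} (hK : 0 < K) (h1 : k ≤ c + 1) (h2 : c ≤ k + 1) {x y : ℝ}
    (hx : x ∈ Set.Icc (k * Real.pi / K) ((k + 1) * Real.pi / K))
    (hy : y ∈ Set.Icc (c * Real.pi / K) ((c + 1) * Real.pi / K)) :
    |x - y| ≤ 2 * Real.pi / K := by
  have hK' : (0 : ℝ) < K := by exact_mod_cast hK
  have hu : 0 < Real.pi / K := div_pos Real.pi_pos hK'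
  have h1' : (k : ℝ) ≤ c + 1 := by exact_mod_cast h1
  have h2' : (c : ℝ) ≤ k + 1 := by exact_mod_cast h2
  simp only [mul_div_assoc, Set.mem_Icc] at hx hy ⊢
  rw [abs_le]
  constructor <;> nlinarith [hx.1, hx.2, hy.1, hy.2]

lemma exists_cell {K : ℕ} (hK : 0 < K) {x : ℝ} (hx : x ∈ Set.Icc 0 Real.pi) :
    ∃ k < K, x ∈ Set.Icc (k * Real.pi / K) ((k + 1) * Real.pi / K) := by
  have hpi := Real.pi_pos
  have hK' : (0 : ℝ) < K := by exact_mod_cast hK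
  rcases eq_or_lt_of_le hx.2 with h | h
  · refine ⟨K - 1, by omega, ?_⟩
    have : ((K - 1 : ℕ) : ℝ) = K - 1 := by rw [Nat.cast_sub hK]; simp
    rw [this, h]
    constructor
    · rw [div_le_iff₀ hK']; nlinarith
    · rw [le_div_iff₀ hK']; nlinarith
  · have h0 : 0 ≤ K * x / Real.pi := div_nonneg (mul_nonneg hK'.le hx.1) hpi.le
    refine ⟨⌊K * x / Real.pi⌋₊, ?_, ?_, ?_⟩
    · rw [Nat.floor_lt h0, div_lt_iff₀ hpi]
      exact mul_lt_mul_of_pos_left h hK'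
    · have := Nat.floor_le h0
      rw [le_div_iff₀ hpi] at this
      rw [div_le_iff₀ hK']
      linarith
    · have := (Nat.lt_floor_add_one (K * x / Real.pi)).le
      rw [div_le_iff₀ hpi] at this
      rw [le_div_iff₀ hK']
      linarith

open Classical in
/-- Hall's marriage theorem, for the relation: same parity, and the eigenvalue is a value of `f`
within `2π / K` of the grid point. If the grid points of a set occupy the cells in `C`, then the
available eigenvalues include those with preimages in `nbhd K C`. Either this is everything, or it
has at least one cell more than `C`, which outweighs the error in the counts. -/
lemma hall_match {f : ℝ → ℝ} {S : Set ℝ} {n K : ℕ} (hK : 0 < K) {l : Fin n → ℝ}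
    (hl : ∀ j, l j ∈ f '' Set.Icc 0 Real.pi)
    (hcount : ∀ C ⊆ Finset.range K, ∀ s : ℝ, s = 1 ∨ s = -1 →
      (n : ℝ) * ((C.card : ℝ) / K / 2 - 1 / (4 * K))
        ≤ ((Finset.univ.filter fun j : Fin n =>
          (-1 : ℝ) ^ (j : ℕ) = s ∧ l j ∈ f '' ⋃ k ∈ C, cell S K k).card : ℝ))
    (hn : 4 * (K : ℝ) * (K + 1) ≤ n) :
    ∃ (σ : Equiv.Perm (Fin n)) (x : Fin n → ℝ),
      (∀ i, (-1 : ℝ) ^ (σ i : ℕ) = (-1) ^ (i : ℕ)) ∧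
      ∀ i, x i ∈ Set.Icc 0 Real.pi ∧ |x i - theta i| ≤ 2 * Real.pi / K ∧ l (σ i) = f (x i) := by
  have hK' : (0 : ℝ) < K := by exact_mod_cast hK
  set t : Fin n → Finset (Fin n) := fun i => Finset.univ.filter fun j =>
    (-1 : ℝ) ^ (j : ℕ) = (-1) ^ (i : ℕ) ∧
      ∃ x ∈ Set.Icc 0 Real.pi, |x - theta i| ≤ 2 * Real.pi / K ∧ l j = f x with ht
  have hall : ∀ B : Finset (Fin n), B.card ≤ (B.biUnion t).card := by
    intro B
    have hpar : ∀ s : ℝ, s = 1 ∨ s = -1 →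
        (B.filter fun i : Fin n => (-1 : ℝ) ^ (i : ℕ) = s).card
          ≤ ((B.biUnion t).filter fun j : Fin n => (-1 : ℝ) ^ (j : ℕ) = s).card := by
      intro s hs
      set Bs := B.filter fun i : Fin n => (-1 : ℝ) ^ (i : ℕ) = s with hBs
      rcases Bs.eq_empty_or_nonempty with h0 | hne
      · simp [h0]
      set C := Bs.image (cellOf K) with hC
      have hCK : C ⊆ Finset.range K := by
        intro c hc
        obtain ⟨i, -, rfl⟩ := Finset.mem_image.mp hc
        exact Finset.mem_range.mpr (cellOf_lt hK i)
      have hmem : ∀ j : Fin n, (-1 : ℝ) ^ (j : ℕ) = s → ∀ x ∈ Set.Icc 0 Real.pi, l j = f x →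
          ∀ k ∈ nbhd K C, x ∈ Set.Icc (k * Real.pi / K) ((k + 1) * Real.pi / K) →
          j ∈ (B.biUnion t).filter fun j : Fin n => (-1 : ℝ) ^ (j : ℕ) = s := by
        intro j hj x hx hlx k hk hxk
        obtain ⟨-, c, hc, h1, h2⟩ := Finset.mem_filter.mp hk
        obtain ⟨i, hi, rfl⟩ := Finset.mem_image.mp hc
        obtain ⟨hiB, his⟩ := Finset.mem_filter.mp hi
        refine Finset.mem_filter.mpr ⟨Finset.mem_biUnion.mpr ⟨i, hiB, ?_⟩, hj⟩
        exact Finset.mem_filter.mpr ⟨Finset.mem_univ _, hj.trans his.symm, x, hx,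
          abs_sub_le_of_cells hK h1 h2 hxk (theta_cellOf hK i), hlx⟩
      by_cases hfull : nbhd K C = Finset.range K
      · refine le_trans (Finset.card_le_card (t := Finset.univ.filter fun j : Fin n =>
          (-1 : ℝ) ^ (j : ℕ) = s) (Finset.filter_subset_filter _ (Finset.subset_univ _)))
          (Finset.card_le_card fun j hj => ?_)
        obtain ⟨x, hx, hxl⟩ := hl j
        obtain ⟨k, hk, hxk⟩ := exists_cell hK hx
        exact hmem j (Finset.mem_filter.mp hj).2 x hx hxl.symm k
          (hfull ▸ Finset.mem_range.mpr hk) hxk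
      · have hlt := card_lt_nbhd hCK (hne.image _) hfull
        have hlt' : (C.card : ℝ) + 1 ≤ (nbhd K C).card := by exact_mod_cast hlt
        have hCle : (C.card : ℝ) ≤ K := by
          have := Finset.card_le_card hCK
          rw [Finset.card_range] at this
          exact_mod_cast this
        have hup : (Bs.card : ℝ) ≤ C.card * ((n + 1) / (2 * K) + 1) := by
          have h1 : Bs.card = ∑ c ∈ C, (Bs.filter fun i => cellOf K i = c).card :=
            Finset.card_eq_sum_card_image (cellOf K) Bs
          rw [h1, Nat.cast_sum, ← nsmul_eq_mul]
          refine Finset.sum_le_card_nsmul _ _ _ fun c _ => ?_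
          rw [← Finset.card_image_of_injective _ Fin.val_injective]
          refine card_parity_le hK ?_ ?_
          · intro a ha b hb
            obtain ⟨i, hi, rfl⟩ := Finset.mem_image.mp ha
            obtain ⟨j, hj, rfl⟩ := Finset.mem_image.mp hb
            have h2 := (Finset.mem_filter.mp (Finset.mem_filter.mp hi).1).2
            have h3 := (Finset.mem_filter.mp (Finset.mem_filter.mp hj).1).2
            exact mod_two_eq_of_neg_one_pow_eq (h2.trans h3.symm)
          · intro a ha b hb
            obtain ⟨i, hi, rfl⟩ := Finset.mem_image.mp ha
            obtain ⟨j, hj, rfl⟩ := Finset.mem_image.mp hb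
            have h2 := (cellOf_spec K i).2
            have h3 := (cellOf_spec K j).1
            rw [(Finset.mem_filter.mp hi).2] at h2
            rw [(Finset.mem_filter.mp hj).2] at h3
            nlinarith
        have hlow := hcount (nbhd K C) (Finset.filter_subset _ _) s hs
        have hsub : (Finset.univ.filter fun j : Fin n =>
            (-1 : ℝ) ^ (j : ℕ) = s ∧ l j ∈ f '' ⋃ k ∈ nbhd K C, cell S K k)
            ⊆ (B.biUnion t).filter fun j : Fin n => (-1 : ℝ) ^ (j : ℕ) = s := by
          intro j hj
          obtain ⟨-, hjs, x, hx, hxl⟩ := Finset.mem_filter.mp hj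
          simp only [Set.mem_iUnion] at hx
          obtain ⟨k, hk, hxk⟩ := hx
          have hkK := Finset.mem_range.mp (Finset.mem_filter.mp hk).1
          exact hmem j hjs x (Set.Ioo_subset_Icc_self (cell_subset_Ioo S hkK hxk)) hxl.symm k hk
            (Set.Ioo_subset_Icc_self hxk.1)
        have hsub' : ((Finset.univ.filter fun j : Fin n =>
            (-1 : ℝ) ^ (j : ℕ) = s ∧ l j ∈ f '' ⋃ k ∈ nbhd K C, cell S K k).card : ℝ)
            ≤ ((B.biUnion t).filter fun j : Fin n => (-1 : ℝ) ^ (j : ℕ) = s).card := by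
          exact_mod_cast Finset.card_le_card hsub
        have hreal : (C.card : ℝ) * ((n + 1) / (2 * K) + 1)
            ≤ (n : ℝ) * (((nbhd K C).card : ℝ) / K / 2 - 1 / (4 * K)) := by
          have e1 : (C.card : ℝ) * ((n + 1) / (2 * K) + 1)
              = (2 * C.card * (n + 1 + 2 * K)) / (4 * K) := by
            field_simp; ring
          have e2 : (n : ℝ) * (((nbhd K C).card : ℝ) / K / 2 - 1 / (4 * K))
              = (n * (2 * (nbhd K C).card - 1)) / (4 * K) := by
            field_simp; ring
          rw [e1, e2]
          refine div_le_div_of_nonneg_right ?_ (by positivity)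
          have hn0 : (0 : ℝ) ≤ n := Nat.cast_nonneg n
          have hc0 : (0 : ℝ) ≤ C.card := Nat.cast_nonneg _
          have m1 := mul_le_mul_of_nonneg_left hlt' hn0
          have m2 : (C.card : ℝ) * (1 + 2 * K) ≤ K * (1 + 2 * K) := by gcongr
          nlinarith
        have : (Bs.card : ℝ) ≤ ((B.biUnion t).filter fun j : Fin n => (-1 : ℝ) ^ (j : ℕ) = s).card :=
          hup.trans (hreal.trans (hlow.trans hsub'))
        exact_mod_cast this
    have hsplit : ∀ A : Finset (Fin n), A.card = (A.filter fun i : Fin n => (-1 : ℝ) ^ (i : ℕ) = 1).card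
        + (A.filter fun i : Fin n => (-1 : ℝ) ^ (i : ℕ) = -1).card := by
      intro A
      rw [← Finset.card_filter_add_card_filter_not (s := A) (fun i : Fin n => (-1 : ℝ) ^ (i : ℕ) = 1)]
      congr 2
      apply Finset.filter_congr
      intro i _
      rcases neg_one_pow_eq_or ℝ (i : ℕ) with h | h <;> rw [h] <;> norm_num
    rw [hsplit B, hsplit (B.biUnion t)]
    exact add_le_add (hpar 1 (Or.inl rfl)) (hpar (-1) (Or.inr rfl))
  obtain ⟨g, hginj, hg⟩ := (Finset.all_card_le_biUnion_card_iff_exists_injective t).mp hall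
  have hg' : ∀ i, (-1 : ℝ) ^ (g i : ℕ) = (-1) ^ (i : ℕ) ∧
      ∃ x ∈ Set.Icc 0 Real.pi, |x - theta i| ≤ 2 * Real.pi / K ∧ l (g i) = f x :=
    fun i => (Finset.mem_filter.mp (hg i)).2
  choose hgs x hx hxt hxl using hg'
  exact ⟨Equiv.ofBijective g (Finite.injective_iff_bijective.mp hginj), x, hgs,
    fun i => ⟨hx i, hxt i, hxl i⟩⟩

end ToeplitzFlip

open ToeplitzFlip in
/-- Let `f : [-π,π] → ℝ` be even and bounded, with finitely many (weak)
local max points, local min points and discontinuity points, essential range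
`[inf_{[0,π]} f, sup_{[0,π]} f]`, and `(inf f, sup f) ⊆ f([0,π])`.  Then there exist an
asymptotically uniform grid in `[0,π]`, real unitary matrices `V_n` and orderings of the
eigenvalues of `T_n(f)`, `H_n(f)` realizing the simultaneous diagonalizations, the
alternating sign relation, and `λ_i(T_n(f)) = f(x_{i,n})`. -/
theorem stmt2
    (f : ℝ → ℝ)
    (hf_even : ∀ x, f (-x) = f x)
    (hf_bdd : ∃ C : ℝ, ∀ x ∈ Set.Icc (-Real.pi) Real.pi, |f x| ≤ C)
    (hmax_fin : {x ∈ Set.Icc (-Real.pi) Real.pi |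
      IsLocalMaxOn f (Set.Icc (-Real.pi) Real.pi) x}.Finite)
    (hmin_fin : {x ∈ Set.Icc (-Real.pi) Real.pi |
      IsLocalMinOn f (Set.Icc (-Real.pi) Real.pi) x}.Finite)
    (hdisc_fin : {x ∈ Set.Icc (-Real.pi) Real.pi |
      ¬ ContinuousWithinAt f (Set.Icc (-Real.pi) Real.pi) x}.Finite)
    (hER : essRangeR f (Set.Icc (-Real.pi) Real.pi)
      = Set.Icc (sInf (f '' Set.Icc 0 Real.pi)) (sSup (f '' Set.Icc 0 Real.pi)))
    (hrange : Set.Ioo (sInf (f '' Set.Icc 0 Real.pi)) (sSup (f '' Set.Icc 0 Real.pi))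
      ⊆ f '' Set.Icc 0 Real.pi) :
    ∃ (x : (n : ℕ) → Fin n → ℝ)
      (V : (n : ℕ) → Matrix (Fin n) (Fin n) ℝ) (lamT lamH : (n : ℕ) → Fin n → ℝ),
      (∀ n, ∀ i : Fin n, x n i ∈ Set.Icc 0 Real.pi) ∧
      (∀ ε > (0:ℝ), ∃ N : ℕ, ∀ n ≥ N, ∀ i : Fin n,
        |x n i - ((i : ℕ) + 1) * Real.pi / (n + 1)| < ε) ∧
      (∀ n : ℕ,
        V n * (V n)ᵀ = 1 ∧
        flipM n = V n * Matrix.diagonal (fun i : Fin n => ((-1 : ℝ)) ^ (i : ℕ)) * (V n)ᵀ ∧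
        toeplitzR (fun t => (f t : ℂ)) n = V n * Matrix.diagonal (lamT n) * (V n)ᵀ ∧
        flipM n * toeplitzR (fun t => (f t : ℂ)) n
          = V n * (Matrix.diagonal (fun i : Fin n => ((-1 : ℝ)) ^ (i : ℕ))
              * Matrix.diagonal (lamT n)) * (V n)ᵀ ∧
        (∀ i : Fin n, lamH n i = (-1 : ℝ) ^ (i : ℕ) * lamT n i) ∧
        (∀ i : Fin n, lamT n i = f (x n i))) := by
  classical
  have hpi := Real.pi_pos
  have hf : Sym f := sym_of_finite_disc hf_even hf_bdd hdisc_fin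
  obtain ⟨C, hC⟩ := hf_bdd
  have hCae : ∀ᵐ x ∂circ, |f x| ≤ C :=
    ae_circ_of_finite (by
      convert Set.finite_empty
      ext x
      simp only [Set.mem_sep_iff, Set.mem_empty_iff_false, iff_false, not_and, not_not]
      exact hC x)
  set lo := sInf (f '' Set.Icc 0 Real.pi) with hlo
  set hi := sSup (f '' Set.Icc 0 Real.pi) with hhi
  -- by evenness, the bounds on `[0, π]` hold on `[-π, π]`
  have hIcc : ∀ x ∈ Set.Icc (-Real.pi) Real.pi, f x ∈ f '' Set.Icc 0 Real.pi := by
    intro x hx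
    rcases le_total 0 x with h | h
    · exact ⟨x, ⟨h, hx.2⟩, rfl⟩
    · exact ⟨-x, ⟨by linarith, by linarith [hx.1]⟩, hf_even x⟩
  have hsub : Set.Icc 0 Real.pi ⊆ Set.Icc (-Real.pi) Real.pi :=
    Set.Icc_subset_Icc (by linarith) le_rfl
  have hba : BddAbove (f '' Set.Icc 0 Real.pi) :=
    ⟨C, by rintro _ ⟨x, hx, rfl⟩; exact (abs_le.mp (hC x (hsub hx))).2⟩
  have hbb : BddBelow (f '' Set.Icc 0 Real.pi) :=
    ⟨-C, by rintro _ ⟨x, hx, rfl⟩; exact (abs_le.mp (hC x (hsub hx))).1⟩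
  -- the extreme values are only attained at local extrema
  have hhi_ae : ∀ᵐ x ∂circ, f x < hi := by
    refine ae_circ_of_finite (hmax_fin.subset ?_)
    rintro x ⟨hx, hx'⟩
    refine ⟨hx, eventually_nhdsWithin_of_forall fun y hy => ?_⟩
    exact (le_csSup hba (hIcc y hy)).trans (not_lt.mp hx')
  have hlo_ae : ∀ᵐ x ∂circ, lo < f x := by
    refine ae_circ_of_finite (hmin_fin.subset ?_)
    rintro x ⟨hx, hx'⟩
    refine ⟨hx, eventually_nhdsWithin_of_forall fun y hy => ?_⟩
    exact (not_lt.mp hx').trans (csInf_le hbb (hIcc y hy))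
  have hex : ∀ n, ∃ (V : Matrix (Fin n) (Fin n) ℝ) (l : Fin n → ℝ), Adapted (toep f n) V l := by
    intro n
    obtain ⟨V, l, h1, h2, h3⟩ := exists_adapted_basis (toep_transpose f n) (toep_mul_flipM f n)
      (fun v => quad_bound hf hCae v)
    exact ⟨V, l, h1, h2, h3⟩
  choose V l hA using hex
  have hl : ∀ n j, l n j ∈ f '' Set.Icc 0 Real.pi := fun n j =>
    hrange ⟨lt_eig hf (hA n) hlo_ae j, eig_lt hf (hA n) hhi_ae j⟩
  set S : Set ℝ := {x ∈ Set.Icc (-Real.pi) Real.pi |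
      IsLocalMaxOn f (Set.Icc (-Real.pi) Real.pi) x} ∪ {x ∈ Set.Icc (-Real.pi) Real.pi |
      IsLocalMinOn f (Set.Icc (-Real.pi) Real.pi) x} ∪ {x ∈ Set.Icc (-Real.pi) Real.pi |
      ¬ ContinuousWithinAt f (Set.Icc (-Real.pi) Real.pi) x} with hS
  have hSfin : S.Finite := (hmax_fin.union hmin_fin).union hdisc_fin
  -- the accuracy `2π / (k + 1)` is available at level `n`
  set P : ℕ → ℕ → Prop := fun n k => ∃ (σ : Equiv.Perm (Fin n)) (x : Fin n → ℝ),
      (∀ i, (-1 : ℝ) ^ (σ i : ℕ) = (-1) ^ (i : ℕ)) ∧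
      ∀ i, x i ∈ Set.Icc 0 Real.pi ∧ |x i - theta i| ≤ 2 * Real.pi / ((k + 1 : ℕ) : ℝ) ∧
        l n (σ i) = f (x i) with hP
  have hP0 : ∀ n, P n 0 := by
    intro n
    choose x hx hxl using hl n
    refine ⟨Equiv.refl _, x, fun i => rfl, fun i => ⟨hx i, ?_, (hxl i).symm⟩⟩
    have h1 := hx i
    have h2 := theta_mem i
    rw [abs_le]
    norm_num
    constructor <;> linarith [h1.1, h1.2, h2.1, h2.2]
  have hPev : ∀ k, ∀ᶠ n in atTop, P n k := by
    intro k
    have hK : 0 < k + 1 := Nat.succ_pos k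
    have hcnt : ∀ D ∈ (Finset.range (k + 1)).powerset, ∀ᶠ n : ℕ in atTop, ∀ s : ℝ, s = 1 ∨ s = -1 →
        (n : ℝ) * ((D.card : ℝ) / ((k + 1 : ℕ) : ℝ) / 2 - 1 / (4 * ((k + 1 : ℕ) : ℝ)))
          ≤ ((Finset.univ.filter fun j : Fin n =>
            (-1 : ℝ) ^ (j : ℕ) = s ∧ l n j ∈ f '' ⋃ m ∈ D, cell S (k + 1) m).card : ℝ) := by
      intro D hD
      rw [Finset.mem_powerset] at hD
      have hW : ∀ x ∈ ⋃ m ∈ D, cell S (k + 1) m, x ∈ Set.Ioo 0 Real.pi ∧ x ∉ S := by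
        intro x hx
        simp only [Set.mem_iUnion] at hx
        obtain ⟨m, hm, hx⟩ := hx
        exact ⟨cell_subset_Ioo S (Finset.mem_range.mp (hD hm)) hx, hx.2⟩
      have hnhds : ∀ x ∈ Set.Ioo 0 Real.pi, Set.Icc (-Real.pi) Real.pi ∈ nhds x := fun x hx =>
        Icc_mem_nhds (by linarith [hx.1]) hx.2
      have hIoo : ∀ x ∈ Set.Ioo 0 Real.pi, x ∈ Set.Icc (-Real.pi) Real.pi := fun x hx =>
        mem_of_mem_nhds (hnhds x hx)
      have hopen : IsOpen (f '' ⋃ m ∈ D, cell S (k + 1) m) := by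
        apply isOpen_image
        · exact isOpen_biUnion fun m _ => isOpen_Ioo.sdiff hSfin.isClosed
        · intro x hx
          obtain ⟨h1, h2⟩ := hW x hx
          by_contra h
          exact h2 (Or.inr ⟨hIoo x h1, fun h' => h (h'.continuousAt (hnhds x h1))⟩)
        · intro x hx h
          obtain ⟨h1, h2⟩ := hW x hx
          exact h2 (Or.inl (Or.inl ⟨hIoo x h1, h.on _⟩))
        · intro x hx h
          obtain ⟨h1, h2⟩ := hW x hx
          exact h2 (Or.inl (Or.inr ⟨hIoo x h1, h.on _⟩))
      have hne : (f '' ⋃ m ∈ D, cell S (k + 1) m)ᶜ.Nonempty := by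
        refine ⟨C + 1, ?_⟩
        rintro ⟨x, hx, hx'⟩
        have := (abs_le.mp (hC x (hIoo x (hW x hx).1))).2
        linarith
      have hδ : (0 : ℝ) < 1 / (4 * ((k + 1 : ℕ) : ℝ)) := by positivity
      filter_upwards [count_lower hf hopen hne hδ] with n hn s hs
      refine le_trans ?_ ((hn (V n) (l n) (hA n) s hs).trans (le_of_eq ?_))
      · have := circ_cells hf_even hSfin hD
        gcongr
      · congr!
    have hall := (Filter.eventually_all_finset _).mpr hcnt
    have hlarge : ∀ᶠ n : ℕ in atTop,
        4 * ((k + 1 : ℕ) : ℝ) * (((k + 1 : ℕ) : ℝ) + 1) ≤ (n : ℝ) :=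
      tendsto_natCast_atTop_atTop.eventually_ge_atTop _
    filter_upwards [hall, hlarge] with n h1 h2
    refine hall_match (S := S) hK (hl n) (fun D hD s hs => ?_) h2
    refine (h1 D (Finset.mem_powerset.mpr hD) s hs).trans (le_of_eq ?_)
    congr!
  -- at level `n`, the best accuracy available among the first `n`
  have hbest : ∀ n, P n (Nat.findGreatest (P n) n) := fun n =>
    Nat.findGreatest_spec (Nat.zero_le n) (hP0 n)
  choose σ x hσ hx using hbest
  refine ⟨x, fun n => (V n).submatrix id (σ n), fun n => l n ∘ σ n,
    fun n i => (-1 : ℝ) ^ (i : ℕ) * l n (σ n i), fun n i => (hx n i).1, ?_, ?_⟩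
  · intro ε hε
    obtain ⟨k, hk⟩ := exists_nat_gt (2 * Real.pi / ε)
    obtain ⟨N, hN⟩ := eventually_atTop.mp (hPev k)
    refine ⟨max N k, fun n hn i => ?_⟩
    have hle : k ≤ Nat.findGreatest (P n) n :=
      Nat.le_findGreatest ((le_max_right _ _).trans hn) (hN n ((le_max_left _ _).trans hn))
    refine (hx n i).2.1.trans_lt ?_
    rw [div_lt_iff₀ hε] at hk
    rw [div_lt_iff₀ (by positivity)]
    refine hk.trans_le ?_
    rw [mul_comm]
    gcongr
    omega
  · intro n
    have hflip : flipM n = (V n).submatrix id (σ n)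
        * Matrix.diagonal (fun i : Fin n => ((-1 : ℝ)) ^ (i : ℕ))
        * ((V n).submatrix id (σ n))ᵀ := by
      conv_lhs => rw [(hA n).flip, conj_diagonal_perm (V n) _ (σ n)]
      congr 3
      exact funext (hσ n)
    have horth : (V n).submatrix id (σ n) * ((V n).submatrix id (σ n))ᵀ = 1 := by
      rw [submatrix_perm_orth, (hA n).orth]
    have hT : toeplitzR (fun t => (f t : ℂ)) n = (V n).submatrix id (σ n)
        * Matrix.diagonal (l n ∘ σ n) * ((V n).submatrix id (σ n))ᵀ := by
      rw [toeplitzR_eq hf, ← conj_diagonal_perm, ← (hA n).eig]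
    refine ⟨horth, hflip, hT, ?_, fun i => rfl, fun i => (hx n i).2.2⟩
    have horth' := mul_eq_one_comm.mp horth
    conv_lhs => rw [hT, hflip]
    simp only [Matrix.mul_assoc]
    rw [← Matrix.mul_assoc ((V n).submatrix id (σ n))ᵀ ((V n).submatrix id (σ n)), horth',
      Matrix.one_mul]
end

section
/- Let T_n be a real symmetric n×n Toeplitz matrix. Then there exists an orthonormal basis of ℝⁿ consisting of eigenvectors of T_n such that exactly ⌈n/2⌉ vectors of this basis are symmetric (Y_n v = v) and the other ⌊n/2⌋ vectors are skew-symmetric (Y_n v = −v). -/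
/-!
Write `J` for the flip. A symmetric Toeplitz matrix commutes with `J`, because reversing both
indices of `T` transposes it. Choose a real `c` such that `2c` is not a difference of two
eigenvalues of `T`, and take an orthonormal eigenbasis of the symmetric matrix `T + c J`.
If `v` is one of its vectors, with eigenvalue `m`, then `v + J v` and `v - J v` satisfy
`T (v + J v) = (m - c) (v + J v)` and `T (v - J v) = (m + c) (v - J v)`; by the choice of `c` they
cannot both be nonzero, so `J v = v` or `J v = -v`, and `v` is an eigenvector of `T`
(`exists_eigenbasis`).

For the count, if `p` vectors are symmetric and `q` are skew-symmetric, then `p + q = n`, while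
`p - q` is the trace of `J` in this basis, which is `n % 2` (`flip_trace`).
-/

open Matrix

theorem flip_mulVec (n : ℕ) (v : Fin n → ℝ) : flipM n *ᵥ v = fun i => v i.rev := by
  funext i
  have h : ∀ j : Fin n, flipM n i j = if j = i.rev then 1 else 0 := by
    intro j
    have : ((i : ℕ) + (j : ℕ) = n - 1) ↔ j = i.rev := by
      rw [Fin.ext_iff, Fin.val_rev]; omega
    simp [flipM, this]
  simp [Matrix.mulVec, dotProduct, h]

theorem flipM_flipM (n : ℕ) (v : Fin n → ℝ) : flipM n *ᵥ (flipM n *ᵥ v) = v := by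
  simp [flip_mulVec]

theorem flip_isSymm (n : ℕ) : (flipM n)ᵀ = flipM n := by
  ext i j
  simp [flipM, add_comm]

theorem flip_trace (n : ℕ) : (flipM n).trace = ((n % 2 : ℕ) : ℝ) := by
  simp only [Matrix.trace, Matrix.diag, flipM, Matrix.of_apply]
  rcases Nat.even_or_odd' n with ⟨k, rfl | rfl⟩
  · rw [Finset.sum_eq_zero]
    · simp
    · intro i _
      have := i.isLt
      rw [if_neg (by omega)]
  · rw [Finset.sum_eq_single (⟨k, by omega⟩ : Fin (2 * k + 1))]
    · rw [if_pos (by simp; omega)]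
      simp [Nat.add_mod]
    · intro i _ hi
      rw [if_neg]
      intro h
      exact hi (Fin.ext (by simp; omega))
    · simp

theorem toeplitz_flip_comm (n : ℕ) (T : Matrix (Fin n) (Fin n) ℝ) (t : ℤ → ℝ)
    (hToep : ∀ i j : Fin n, T i j = t ((i : ℤ) - (j : ℤ))) (hsym : Tᵀ = T) (v : Fin n → ℝ) :
    T *ᵥ (flipM n *ᵥ v) = flipM n *ᵥ (T *ᵥ v) := by
  have hrev : ∀ i j : Fin n, T i.rev j = T i j.rev := by
    intro i j
    rw [← congrFun (congrFun hsym i) j.rev, Matrix.transpose_apply, hToep, hToep]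
    congr 1
    have := i.isLt
    have := j.isLt
    simp only [Fin.val_rev]
    omega
  funext i
  simp only [flip_mulVec]
  simp only [Matrix.mulVec, dotProduct]
  rw [← Equiv.sum_comp Fin.revPerm]
  simp [hrev]

/-- A symmetric matrix commuting with the flip has an orthonormal eigenbasis of symmetric and
skew-symmetric vectors. -/
theorem exists_eigenbasis (n : ℕ) (T : Matrix (Fin n) (Fin n) ℝ) (hsym : Tᵀ = T)
    (hcomm : ∀ v, T *ᵥ (flipM n *ᵥ v) = flipM n *ᵥ (T *ᵥ v)) :
    ∃ (v : Fin n → Fin n → ℝ) (μ : Fin n → ℝ),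
      (∀ i j : Fin n, v i ⬝ᵥ v j = if i = j then (1:ℝ) else 0) ∧
      (∀ i : Fin n, T *ᵥ v i = μ i • v i) ∧
      (∀ i, flipM n *ᵥ v i = v i ∨ flipM n *ᵥ v i = -(v i)) := by
  set S : Set ℝ := {a | Module.End.HasEigenvalue (Matrix.toLin' T) a} with hS
  have hSfin : S.Finite := Module.End.finite_hasEigenvalue _
  obtain ⟨c, hc⟩ := (hSfin.image2 (fun a b => (a - b) / 2) hSfin).exists_notMem
  have hmem : ∀ (a : ℝ) (w : Fin n → ℝ), T *ᵥ w = a • w → w ≠ 0 → a ∈ S := by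
    intro a w hw hw0
    refine Module.End.hasEigenvalue_of_hasEigenvector (x := w) ⟨?_, hw0⟩
    rw [Module.End.mem_eigenspace_iff, Matrix.toLin'_apply, hw]
  have hM : (T + c • flipM n).IsHermitian := by
    rw [Matrix.IsHermitian, Matrix.conjTranspose_eq_transpose_of_trivial, Matrix.transpose_add,
      Matrix.transpose_smul, hsym, flip_isSymm]
  set v : Fin n → Fin n → ℝ := fun i => (hM.eigenvectorBasis i).ofLp with hv
  have key : ∀ i, ∃ m : ℝ, T *ᵥ v i = m • v i ∧
      (flipM n *ᵥ v i = v i ∨ flipM n *ᵥ v i = -(v i)) := by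
    intro i
    set x := v i
    set m := hM.eigenvalues i
    have hx : T *ᵥ x + c • (flipM n *ᵥ x) = m • x := by
      rw [← Matrix.smul_mulVec, ← Matrix.add_mulVec]
      exact hM.mulVec_eigenvectorBasis i
    have hTx : T *ᵥ x = m • x - c • (flipM n *ᵥ x) := eq_sub_of_add_eq hx
    have hTJ : T *ᵥ (flipM n *ᵥ x) = m • (flipM n *ᵥ x) - c • x := by
      rw [hcomm, hTx, Matrix.mulVec_sub, Matrix.mulVec_smul, Matrix.mulVec_smul, flipM_flipM]
    have hplus : T *ᵥ (x + flipM n *ᵥ x) = (m - c) • (x + flipM n *ᵥ x) := by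
      rw [Matrix.mulVec_add, hTx, hTJ]; module
    have hminus : T *ᵥ (x - flipM n *ᵥ x) = (m + c) • (x - flipM n *ᵥ x) := by
      rw [Matrix.mulVec_sub, hTx, hTJ]; module
    by_cases h1 : x - flipM n *ᵥ x = 0
    · have h : flipM n *ᵥ x = x := (sub_eq_zero.mp h1).symm
      refine ⟨m - c, ?_, Or.inl h⟩
      rw [hTx, h, sub_smul]
    by_cases h2 : x + flipM n *ᵥ x = 0
    · have h : flipM n *ᵥ x = -x := (neg_eq_of_add_eq_zero_right h2).symm
      refine ⟨m + c, ?_, Or.inr h⟩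
      rw [hTx, h, add_smul, smul_neg, sub_neg_eq_add]
    · exact absurd ⟨m + c, hmem _ _ hminus h1, m - c, hmem _ _ hplus h2, by ring⟩ hc
  choose μ hμ using key
  refine ⟨v, μ, ?_, fun i => (hμ i).1, fun i => (hμ i).2⟩
  intro i j
  have h := orthonormal_iff_ite.mp hM.eigenvectorBasis.orthonormal i j
  rw [EuclideanSpace.inner_eq_star_dotProduct, star_trivial, dotProduct_comm] at h
  exact h

/-- Let `T` be a real symmetric `n × n` Toeplitz matrix.  Then there is
an orthonormal basis of `ℝⁿ` consisting of eigenvectors of `T` such that exactly `⌈n/2⌉`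
of its vectors are symmetric (`Y_n v = v`) and the other `⌊n/2⌋` are skew-symmetric
(`Y_n v = -v`). -/
theorem stmt10
    (n : ℕ) (T : Matrix (Fin n) (Fin n) ℝ) (t : ℤ → ℝ)
    (hToep : ∀ i j : Fin n, T i j = t ((i : ℤ) - (j : ℤ)))
    (hsym : Tᵀ = T) :
    ∃ (v : Fin n → Fin n → ℝ) (μ : Fin n → ℝ),
      (∀ i j : Fin n, v i ⬝ᵥ v j = if i = j then (1:ℝ) else 0) ∧
      (∀ i : Fin n, T *ᵥ v i = μ i • v i) ∧
      {i : Fin n | flipM n *ᵥ v i = v i}.ncard = (n + 1) / 2 ∧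
      {i : Fin n | flipM n *ᵥ v i = -(v i)}.ncard = n / 2 := by
  classical
  obtain ⟨v, μ, hon, heig, hflip⟩ :=
    exists_eigenbasis n T hsym (toeplitz_flip_comm n T t hToep hsym)
  refine ⟨v, μ, hon, heig, ?_⟩
  have hneg : ∀ i, flipM n *ᵥ v i = -(v i) ↔ ¬ flipM n *ᵥ v i = v i := by
    intro i
    refine ⟨fun h h' => ?_, fun h => (hflip i).resolve_left h⟩
    have h0 : v i = 0 := self_eq_neg.mp (h'.symm.trans h)
    simpa [h0] using hon i i
  -- The matrix with rows `v i` is orthogonal, so conjugating by it preserves the trace of the flip.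
  have hV : Matrix.of v * (Matrix.of v)ᵀ = 1 := by
    ext i j
    rw [Matrix.one_apply, ← hon i j]
    rfl
  have htr : ∑ i, v i ⬝ᵥ (flipM n *ᵥ v i) = ((n % 2 : ℕ) : ℝ) := by
    rw [← flip_trace]
    calc ∑ i, v i ⬝ᵥ (flipM n *ᵥ v i)
        = (Matrix.of v * (flipM n * (Matrix.of v)ᵀ)).trace := rfl
      _ = (flipM n).trace := by
        rw [Matrix.trace_mul_comm, Matrix.mul_assoc, mul_eq_one_comm.mp hV, Matrix.mul_one]
  have hval : ∀ i, v i ⬝ᵥ (flipM n *ᵥ v i) =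
      (if flipM n *ᵥ v i = v i then (1 : ℝ) else 0)
        - (if ¬ flipM n *ᵥ v i = v i then (1 : ℝ) else 0) := by
    intro i
    by_cases h : flipM n *ᵥ v i = v i
    · simp [h, hon]
    · rw [if_neg h, if_pos h, (hneg i).mpr h]
      simp [hon]
  have hcard := Finset.card_filter_add_card_filter_not (s := (Finset.univ : Finset (Fin n)))
    (fun i => flipM n *ᵥ v i = v i)
  rw [Finset.sum_congr rfl fun i _ => hval i, Finset.sum_sub_distrib, Finset.sum_boole,
    Finset.sum_boole, sub_eq_iff_eq_add] at htr
  norm_cast at htr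
  simp only [hneg, Set.ncard_eq_toFinset_card', Set.toFinset_ofPred]
  rw [Finset.card_univ, Fintype.card_fin] at hcard
  omega
end

section
/- Let T_n be a real symmetric n×n Toeplitz matrix and H_n = Y_n T_n. Let {v_1,…,v_n} be an orthonormal basis of ℝⁿ such that v_i is symmetric (Y_n v_i = v_i) for odd i and skew-symmetric (Y_n v_i = −v_i) for even i, and such that T_n v_i = λ_i v_i for i = 1,…,n, where λ_1,…,λ_n are the eigenvalues of T_n in some ordering. Then H_n v_i = (−1)^{i+1} λ_i v_i for i = 1,…,n; in particular, with V_n = [v_1|…|v_n] and Δ_n = diag_{i=1,…,n}((−1)^{i+1}), D_n = diag_{i=1,…,n}(λ_i), one has H_n = V_n Δ_n D_n V_nᵀ, so the eigenvalues of H_n are (−1)^{i+1} λ_i, i = 1,…,n. -/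
/-!
Each `v i` is a common eigenvector of `T` and of the flip matrix, so it is an eigenvector of their
product, with eigenvalue the product of the two. Collecting these relations as columns gives
`H V = V Δ D`, and the matrix `V` of orthonormal columns is orthogonal, so multiplying on the right
by `Vᵀ` gives the factorization.
-/

open Matrix

/-- Let `T` be a real symmetric `n × n` Toeplitz matrix, `H = Y_n T`,
and let `v_1, …, v_n` be an orthonormal basis of `ℝⁿ` with `v_i` symmetric for odd `i`
(1-indexed; i.e. `Y_n v_i = (-1)^{i+1} v_i`) and `T v_i = λ_i v_i`.  Then
`H v_i = (-1)^{i+1} λ_i v_i` for all `i`; in particular, with `V = [v_1|…|v_n]`,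
`H = V Δ D Vᵀ`, so the eigenvalues of `H` are `(-1)^{i+1} λ_i`. -/
theorem stmt11
    (n : ℕ) (T : Matrix (Fin n) (Fin n) ℝ) (t : ℤ → ℝ)
    (hToep : ∀ i j : Fin n, T i j = t ((i : ℤ) - (j : ℤ)))
    (hsym : Tᵀ = T)
    (v : Fin n → Fin n → ℝ) (lam : Fin n → ℝ)
    (horth : ∀ i j : Fin n, v i ⬝ᵥ v j = if i = j then (1:ℝ) else 0)
    (hflip : ∀ i : Fin n, flipM n *ᵥ v i = ((-1 : ℝ) ^ (i : ℕ)) • v i)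
    (heig : ∀ i : Fin n, T *ᵥ v i = lam i • v i) :
    (∀ i : Fin n, (flipM n * T) *ᵥ v i = ((-1 : ℝ) ^ (i : ℕ) * lam i) • v i) ∧
    (flipM n * T
      = (Matrix.of fun j i => v i j)
        * (Matrix.diagonal (fun i : Fin n => ((-1 : ℝ)) ^ (i : ℕ)) * Matrix.diagonal lam)
        * (Matrix.of fun j i => v i j)ᵀ) := by
  have hH : ∀ i : Fin n,
      (flipM n * T) *ᵥ v i = ((-1 : ℝ) ^ (i : ℕ) * lam i) • v i := by
    intro i
    rw [← Matrix.mulVec_mulVec, heig, Matrix.mulVec_smul, hflip, smul_smul, mul_comm]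
  refine ⟨hH, ?_⟩
  set V : Matrix (Fin n) (Fin n) ℝ := Matrix.of fun j i => v i j with hV
  -- Orthonormality gives `Vᵀ V = 1`; for square matrices this also yields `V Vᵀ = 1`.
  have hVV : V * Vᵀ = 1 := by
    apply mul_eq_one_comm.mp
    ext i j
    rw [Matrix.one_apply, ← horth i j]
    rfl
  have hcol : flipM n * T * V
      = V * (Matrix.diagonal (fun i : Fin n => (-1 : ℝ) ^ (i : ℕ)) * Matrix.diagonal lam) := by
    ext j i
    rw [Matrix.diagonal_mul_diagonal, Matrix.mul_diagonal]
    refine (congrFun (hH i) j).trans ?_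
    simp only [Pi.smul_apply, smul_eq_mul, hV, Matrix.of_apply]
    ring
  rw [← hcol, Matrix.mul_assoc _ V, hVV, Matrix.mul_one]
end

section
/- Let {A_n}_n be a matrix-sequence with A_n of size d_n → ∞, let f : [a,b] → ℂ^{r×r} be measurable, and suppose {A_n}_n ∼_λ f. Let λ_1(f),…,λ_r(f) : [a,b] → ℂ be r measurable functions such that for every x ∈ [a,b], λ_1(f(x)),…,λ_r(f(x)) are the eigenvalues of the matrix f(x). Then for every α < β, {A_n}_n ∼_λ f̃, where f̃ : [α,β] → ℂ is the concatenation of resized versions of λ_1(f),…,λ_r(f): for j = 1,…,r and y in the j-th subinterval [α + (j−1)(β−α)/r, α + j(β−α)/r), one sets f̃(y) = λ_j(f(a + ((b−a)r/(β−α))(y − α − (j−1)(β−α)/r))) (with the last subinterval closed at β). -/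
/-!
The two limits agree because the two symbols have the same averages. Cut `[α,β]` at the nodes
`α + k(β-α)/r`. Inside the `k`-th piece the concatenated symbol is `λ_k` composed with the affine
map of that piece onto `[a,b]` (`concatSymbol_eq_piece`), so an affine change of variables gives
`(β-α)/((b-a)r) ∫_a^b F(λ_k)` as the integral over it (`integral_piece`). Summing over `k` and
dividing by `β-α` yields the average of `(1/r) ∑_k F(λ_k)` over `[a,b]`. All integrals are genuine
since `F ∘ λ_k` is bounded and measurable.
-/

open MeasureTheory Matrix Filter

/-- The concatenation on `[α,β]` of resized versions of the `r` eigenvalue functions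
`lamf 0, …, lamf (r-1)` of a matrix-valued symbol defined on `[a,b]`. -/
noncomputable def concatSymbol (r : ℕ) (hr : 0 < r) (a b α β : ℝ)
    (lamf : Fin r → ℝ → ℂ) (y : ℝ) : ℂ :=
  let j : ℕ := min (r - 1) (Nat.floor ((y - α) * r / (β - α)))
  lamf ⟨j, lt_of_le_of_lt (min_le_left _ _) (Nat.sub_lt hr Nat.one_pos)⟩
    (a + ((b - a) * r / (β - α)) * (y - α - j * (β - α) / r))

/-- The open piece avoids the right node, where the floor jumps to the next index; the nodes form a
null set, so this suffices for integration. -/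
lemma concatSymbol_eq_piece (r : ℕ) (hr : 0 < r) (a b α β : ℝ) (hαβ : α < β)
    (lamf : Fin r → ℝ → ℂ) (k : Fin r) (y : ℝ)
    (hy : y ∈ Set.Ioo (α + (k : ℕ) * ((β - α) / r)) (α + ((k : ℕ) + 1 : ℕ) * ((β - α) / r))) :
    concatSymbol r hr a b α β lamf y =
      lamf k ((b - a) * r / (β - α) * y +
        (a - (b - a) * r / (β - α) * (α + (k : ℕ) * ((β - α) / r)))) := by
  have hrR : (0 : ℝ) < r := by exact_mod_cast hr
  have hβα : 0 < β - α := sub_pos.2 hαβ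
  obtain ⟨h1, h2⟩ := hy
  push_cast at h2
  have hfl : Nat.floor ((y - α) * r / (β - α)) = (k : ℕ) := by
    have hL : ((k : ℕ) : ℝ) * ((β - α) / r) * r = (k : ℕ) * (β - α) := by field_simp
    have hR : (((k : ℕ) : ℝ) + 1) * ((β - α) / r) * r = ((k : ℕ) + 1) * (β - α) := by field_simp
    rw [Nat.floor_eq_iff (div_nonneg (mul_nonneg ?_ hrR.le) hβα.le), le_div_iff₀ hβα,
      div_lt_iff₀ hβα]
    · constructor <;> nlinarith
    · have : 0 ≤ ((k : ℕ) : ℝ) * ((β - α) / r) := by positivity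
      linarith
  have hj : min (r - 1) (Nat.floor ((y - α) * r / (β - α))) = (k : ℕ) := by
    rw [hfl]; have := k.isLt; omega
  simp only [concatSymbol, hj]
  congr 1
  ring

lemma intervalIntegrable_comp_symbol {F : ℂ → ℂ} (hF : Continuous F) (hFc : HasCompactSupport F)
    {g : ℝ → ℂ} (hg : Measurable g) (u v : ℝ) :
    IntervalIntegrable (fun x => F (g x)) volume u v := by
  obtain ⟨C, hC⟩ := hFc.exists_bound_of_continuous hF
  exact (intervalIntegrable_const (c := C)).mono_fun
    (hF.measurable.comp hg).aestronglyMeasurable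
    (ae_of_all _ fun x => (hC (g x)).trans (le_abs_self C))

lemma integral_piece (r : ℕ) (hr : 0 < r) (a b α β : ℝ) (hab : a < b) (hαβ : α < β)
    (lamf : Fin r → ℝ → ℂ) (hlamf_meas : ∀ j, Measurable (lamf j))
    {F : ℂ → ℂ} (hF : Continuous F) (hFc : HasCompactSupport F) (k : Fin r) :
    IntervalIntegrable (fun y => F (concatSymbol r hr a b α β lamf y)) volume
        (α + (k : ℕ) * ((β - α) / r)) (α + ((k : ℕ) + 1 : ℕ) * ((β - α) / r)) ∧
      ∫ y in (α + (k : ℕ) * ((β - α) / r))..(α + ((k : ℕ) + 1 : ℕ) * ((β - α) / r)),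
          F (concatSymbol r hr a b α β lamf y) =
        ((b - a) * r / (β - α))⁻¹ • ∫ x in a..b, F (lamf k x) := by
  have hrR : (0 : ℝ) < r := by exact_mod_cast hr
  have hβα : 0 < β - α := sub_pos.2 hαβ
  have hba : 0 < b - a := sub_pos.2 hab
  have hle : α + (k : ℕ) * ((β - α) / r) ≤ α + ((k : ℕ) + 1 : ℕ) * ((β - α) / r) := by
    have : 0 < (β - α) / r := by positivity
    push_cast; linarith
  set c := (b - a) * r / (β - α) with hc
  have hc0 : c ≠ 0 := by positivity
  set u := α + (k : ℕ) * ((β - α) / r) with hu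
  set v := α + ((k : ℕ) + 1 : ℕ) * ((β - α) / r) with hv
  have heq : ∀ y ∈ Set.Ioo u v, F (lamf k (c * y + (a - c * u))) =
      F (concatSymbol r hr a b α β lamf y) := fun y hy => by
    rw [concatSymbol_eq_piece r hr a b α β hαβ lamf k y hy]
  have hae : (fun y => F (lamf k (c * y + (a - c * u)))) =ᵐ[volume.restrict (Set.uIoc u v)]
      (fun y => F (concatSymbol r hr a b α β lamf y)) := by
    rw [Set.uIoc_of_le hle, ← restrict_Ioo_eq_restrict_Ioc]
    exact (ae_restrict_iff' measurableSet_Ioo).2 (ae_of_all _ heq)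
  constructor
  · refine IntervalIntegrable.congr_ae ?_ hae
    exact intervalIntegrable_comp_symbol hF hFc
      (g := fun y => lamf k (c * y + (a - c * u))) ((hlamf_meas k).comp (by fun_prop)) u v
  · rw [← intervalIntegral.integral_congr_ae_restrict hae,
      intervalIntegral.integral_comp_mul_add (fun x => F (lamf k x)) hc0]
    have e1 : c * u + (a - c * u) = a := by ring
    have e2 : c * v + (a - c * u) = b := by
      rw [hu, hv, hc]; push_cast; field_simp; ring
    rw [e1, e2]

/-- Let `{A_n}` be a matrix-sequence with `A_n` of size `d_n → ∞`, let
`f : [a,b] → ℂ^{r×r}` be measurable with `{A_n} ∼_λ f`, and let `λ_1(f), …, λ_r(f)` be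
measurable eigenvalue functions of `f`.  Then for every `α < β`, `{A_n} ∼_λ f̃`, where `f̃`
is the concatenation on `[α,β]` of resized versions of `λ_1(f), …, λ_r(f)`. -/
theorem stmt15
    (d : ℕ → ℕ) (hd : Tendsto d atTop atTop)
    (A : (n : ℕ) → Matrix (Fin (d n)) (Fin (d n)) ℂ)
    (eigs : (n : ℕ) → Fin (d n) → ℂ)
    (heigs : ∀ n : ℕ, (A n).charpoly.roots = Finset.univ.val.map (eigs n))
    (a b : ℝ) (hab : a < b)
    (r : ℕ) (hr : 0 < r)
    (f : ℝ → Matrix (Fin r) (Fin r) ℂ)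
    (hf_meas : ∀ i j : Fin r, Measurable (fun x => f x i j))
    (lamf : Fin r → ℝ → ℂ) (hlamf_meas : ∀ j, Measurable (lamf j))
    (hlamf : ∀ x ∈ Set.Icc a b,
      (f x).charpoly.roots = Finset.univ.val.map (fun j => lamf j x))
    (hdist : ∀ F : ℂ → ℂ, Continuous F → HasCompactSupport F →
      Tendsto (fun n : ℕ => (∑ i : Fin (d n), F (eigs n i)) / ((d n : ℕ) : ℂ)) atTop
        (nhds ((∫ x in a..b, (∑ j : Fin r, F (lamf j x)) / (r : ℂ)) / ((b - a : ℝ) : ℂ))))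
    (α β : ℝ) (hαβ : α < β) :
    ∀ F : ℂ → ℂ, Continuous F → HasCompactSupport F →
      Tendsto (fun n : ℕ => (∑ i : Fin (d n), F (eigs n i)) / ((d n : ℕ) : ℂ)) atTop
        (nhds ((∫ y in α..β, F (concatSymbol r hr a b α β lamf y)) / ((β - α : ℝ) : ℂ))) := by
  intro F hF hFc
  convert hdist F hF hFc using 2
  have hrR : (0 : ℝ) < r := by exact_mod_cast hr
  have hβα : 0 < β - α := sub_pos.2 hαβ
  have hba : 0 < b - a := sub_pos.2 hab
  have hpiece := integral_piece r hr a b α β hab hαβ lamf hlamf_meas hF hFc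
  have hsum := intervalIntegral.sum_integral_adjacent_intervals
    (a := fun k : ℕ => α + (k : ℝ) * ((β - α) / r)) (n := r)
    (f := fun y => F (concatSymbol r hr a b α β lamf y)) (μ := volume)
    (fun k hk => (hpiece ⟨k, hk⟩).1)
  have h0 : α + ((0 : ℕ) : ℝ) * ((β - α) / r) = α := by simp
  have h1 : α + (r : ℝ) * ((β - α) / r) = β := by field_simp; ring
  simp only [h0, h1] at hsum
  rw [← hsum, Finset.sum_range, Finset.sum_congr rfl fun k _ => (hpiece k).2,
    intervalIntegral.integral_div, intervalIntegral.integral_finsetSum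
      (fun j _ => intervalIntegrable_comp_symbol hF hFc (hlamf_meas j) a b),
    ← Finset.smul_sum, Complex.real_smul]
  have hrC : (r : ℂ) ≠ 0 := by exact_mod_cast hr.ne'
  have hβαC : (β : ℂ) - α ≠ 0 := by exact_mod_cast hβα.ne'
  have hbaC : (b : ℂ) - a ≠ 0 := by exact_mod_cast hba.ne'
  push_cast
  field_simp
end

section
/- Let f : [a,b] → ℝ be bounded and continuous almost everywhere with essential range ER(f) = [inf_{[a,b]} f, sup_{[a,b]} f]. Let {Λ_n = {λ_{1,n},…,λ_{d_n,n}}}_n be a sequence of finite multisets of real numbers with d_n → ∞, and assume that {Λ_n} ∼ f and that Λ_n ⊆ [inf_{[a,b]} f − ε_n, sup_{[a,b]} f + ε_n] for every n, for some sequence ε_n → 0. Then for every asymptotically uniform grid {x_{i,n}}_{i=1,…,d_n} in [a,b], if σ_n and τ_n are permutations of {1,…,d_n} such that the vectors (f(x_{σ_n(1),n}),…,f(x_{σ_n(d_n),n})) and (λ_{τ_n(1),n},…,λ_{τ_n(d_n),n}) are sorted in increasing order, then max_{i=1,…,d_n} |f(x_{σ_n(i),n}) − λ_{τ_n(i),n}|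 → 0 as n → ∞; in particular, min over permutations τ of max_{i=1,…,d_n} |f(x_{i,n}) − λ_{τ(i),n}| → 0 as n → ∞. -/
/-!
Both the sampled values `f (x n i)` and the numbers `lam n i` are asymptotically distributed as
`f`. For the samples this is convergence of Riemann sums: the step functions built from the grid
values converge to `f` at every continuity point, and dominated convergence applies
(`integrableOn_and_tendsto_grid_average`). For `lam` it is the hypothesis, with test functions cut
off outside a bounded range (`tendsto_average_of_compactSupport`).

Suppose two sorted vectors differ by `ε` at index `i`. The gap between the two entries contains a
level `z` of a fixed finite lattice in `[inf f, sup f]`. A ramp falling from `1` to `0` just below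
`z` sums to at least `i + 1` over the vector with the lower entry, and a ramp falling just above
`z` sums to at most `i` over the other vector. Since `z` lies in the essential range, the limiting
mean of the first ramp is strictly below that of the second (`integral_ramp_lt`), so this is
impossible for large `n`, uniformly over the finitely many levels (`eventually_lt_add`).
The unsorted matching follows by composing the two sorting permutations.
-/

open MeasureTheory Filter

/-! ### Riemann sums over asymptotically uniform grids -/

lemma integral_floor_nat (N : ℕ) (y : ℕ → ℝ) :
    ∫ s in (0:ℝ)..N, y ⌊s⌋₊ = ∑ k ∈ Finset.range N, y k := by
  have key : ∀ k : ℕ, Set.EqOn (fun s : ℝ => y ⌊s⌋₊) (fun _ => y k)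
      (Set.Ioo (k : ℝ) ((k + 1 : ℕ) : ℝ)) := by
    intro k s hs
    have h1 : ⌊s⌋₊ = k := by
      rw [Nat.floor_eq_iff (le_trans (Nat.cast_nonneg k) hs.1.le)]
      exact ⟨hs.1.le, by simpa using hs.2⟩
    simp [h1]
  have hle : ∀ k : ℕ, (k : ℝ) ≤ ((k + 1 : ℕ) : ℝ) := fun k => by push_cast; linarith
  have h := intervalIntegral.sum_integral_adjacent_intervals
    (f := fun s : ℝ => y ⌊s⌋₊) (μ := volume) (a := fun k : ℕ => (k : ℝ)) (n := N) (by
      intro k _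
      rw [intervalIntegrable_iff_integrableOn_Ioo_of_le (hle k)]
      refine IntegrableOn.congr_fun ?_ (key k).symm measurableSet_Ioo
      exact integrableOn_const (by simp))
  simp only [Nat.cast_zero] at h
  rw [← h]
  refine Finset.sum_congr rfl fun k _ => ?_
  rw [intervalIntegral.integral_of_le (hle k), integral_Ioc_eq_integral_Ioo,
    setIntegral_congr_fun measurableSet_Ioo (key k)]
  simp

lemma integral_step {a b : ℝ} (hab : a < b) {N : ℕ} (hN : 0 < N) (y : ℕ → ℝ) :
    ∫ t in a..b, y ⌊(N : ℝ) / (b - a) * t - (N : ℝ) / (b - a) * a⌋₊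
      = (b - a) * ((∑ k ∈ Finset.range N, y k) / N) := by
  have hba : b - a ≠ 0 := (sub_pos.2 hab).ne'
  have hN' : (N : ℝ) ≠ 0 := by positivity
  rw [intervalIntegral.integral_comp_mul_sub (fun s : ℝ => y ⌊s⌋₊) (div_ne_zero hN' hba),
    sub_self, show (N : ℝ) / (b - a) * b - (N : ℝ) / (b - a) * a = N by field_simp,
    integral_floor_nat, smul_eq_mul]
  field_simp

/-- An asymptotically uniform grid point whose index is the one of the cell containing `t`
converges to `t`. -/
lemma tendsto_grid_point {a b : ℝ} (hab : a < b)
    {d : ℕ → ℕ} (hd : Tendsto d atTop atTop) {X : ℕ → ℕ → ℝ}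
    (hX : ∀ ε > (0:ℝ), ∃ N : ℕ, ∀ n ≥ N, ∀ k < d n,
      |X n k - (a + ((k : ℝ) + 1) * (b - a) / (d n + 1))| < ε)
    {t : ℝ} (ht : t ∈ Set.Ioo a b) :
    Tendsto (fun n => X n ⌊(d n : ℝ) / (b - a) * t - (d n : ℝ) / (b - a) * a⌋₊) atTop
      (nhds t) := by
  have hba : 0 < b - a := sub_pos.2 hab
  rw [Metric.tendsto_atTop]
  intro ε hε
  obtain ⟨N₁, hN₁⟩ := hX (ε / 2) (half_pos hε)
  obtain ⟨K, hK⟩ := exists_nat_gt ((b - a) / (ε / 2))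
  obtain ⟨N₂, hN₂⟩ := eventually_atTop.1 (hd.eventually_ge_atTop (K + 1))
  refine ⟨max N₁ N₂, fun n hn => ?_⟩
  have hdK : K + 1 ≤ d n := hN₂ n (le_trans (le_max_right _ _) hn)
  have hdK' : (K : ℝ) + 1 ≤ d n := by exact_mod_cast hdK
  have hd0 : (0:ℝ) < d n := by linarith [(Nat.cast_nonneg K : (0:ℝ) ≤ K)]
  set s : ℝ := (t - a) / (b - a) with hs
  have hs0 : 0 < s := div_pos (by linarith [ht.1]) hba
  have hs1 : s < 1 := (div_lt_one hba).2 (by linarith [ht.2])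
  have hts : t = a + s * (b - a) := by rw [hs]; field_simp; ring
  have harg : (d n : ℝ) / (b - a) * t - (d n : ℝ) / (b - a) * a = d n * s := by
    rw [hs]; field_simp
  rw [harg]
  set k := ⌊(d n : ℝ) * s⌋₊ with hk
  have hk1 : (k : ℝ) ≤ d n * s := Nat.floor_le (by positivity)
  have hk2 : (d n : ℝ) * s < k + 1 := Nat.lt_floor_add_one _
  have hkd : k < d n := by
    have : (k : ℝ) < d n := by nlinarith
    exact_mod_cast this
  have h1 := hN₁ n (le_trans (le_max_left _ _) hn) k hkd
  have h2 : |(a + ((k : ℝ) + 1) * (b - a) / (d n + 1)) - t| < ε / 2 := by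
    have e : (a + ((k : ℝ) + 1) * (b - a) / (d n + 1)) - t
        = ((k : ℝ) + 1 - s * (d n + 1)) * ((b - a) / (d n + 1)) := by
      rw [hts]; field_simp; ring
    have hlt : (b - a) / ((d n : ℝ) + 1) < ε / 2 := by
      rw [div_lt_iff₀ (by positivity)]
      rw [div_lt_iff₀ (by positivity)] at hK
      nlinarith
    have hb : |(k : ℝ) + 1 - s * (d n + 1)| ≤ 1 := by
      rw [abs_le]; constructor <;> nlinarith
    rw [e, abs_mul, abs_of_pos (show 0 < (b - a) / ((d n : ℝ) + 1) by positivity)]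
    calc _ ≤ 1 * ((b - a) / ((d n : ℝ) + 1)) := by gcongr
      _ < ε / 2 := by linarith
  rw [Real.dist_eq]
  calc |X n k - t| ≤ |X n k - (a + ((k : ℝ) + 1) * (b - a) / (d n + 1))|
        + |(a + ((k : ℝ) + 1) * (b - a) / (d n + 1)) - t| := abs_sub_le _ _ _
    _ < ε := by linarith

/-- Averages of a bounded a.e. continuous function over an asymptotically uniform grid converge
to its mean.  Integrability comes out of the same argument: the step functions built from the
grid values converge a.e. to `g`. -/
lemma integrableOn_and_tendsto_grid_average {a b : ℝ} (hab : a < b) {g : ℝ → ℝ} {C : ℝ}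
    (hC : ∀ t ∈ Set.Icc a b, |g t| ≤ C)
    (hg : ∀ᵐ t ∂(volume.restrict (Set.Icc a b)), ContinuousWithinAt g (Set.Icc a b) t)
    {d : ℕ → ℕ} (hd : Tendsto d atTop atTop) {x : (n : ℕ) → Fin (d n) → ℝ}
    (hx_mem : ∀ n : ℕ, ∀ i : Fin (d n), x n i ∈ Set.Icc a b)
    (hx_au : ∀ ε > (0:ℝ), ∃ N : ℕ, ∀ n ≥ N, ∀ i : Fin (d n),
      |x n i - (a + ((i : ℕ) + 1) * (b - a) / (d n + 1))| < ε) :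
    IntegrableOn g (Set.Ioc a b) ∧
    Tendsto (fun n => (∑ i, g (x n i)) / (d n : ℝ)) atTop
      (nhds ((∫ t in a..b, g t) / (b - a))) := by
  have hba : 0 < b - a := sub_pos.2 hab
  -- extend the grid by the point `a` to all natural indices
  set X : ℕ → ℕ → ℝ := fun n k => if h : k < d n then x n ⟨k, h⟩ else a with hXdef
  have hXmem : ∀ n k, X n k ∈ Set.Icc a b := by
    intro n k
    simp only [hXdef]
    split_ifs with h
    · exact hx_mem n _
    · exact ⟨le_rfl, hab.le⟩
  have hXau : ∀ ε > (0:ℝ), ∃ N : ℕ, ∀ n ≥ N, ∀ k < d n,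
      |X n k - (a + ((k : ℝ) + 1) * (b - a) / (d n + 1))| < ε := by
    intro ε hε
    obtain ⟨N, hN⟩ := hx_au ε hε
    refine ⟨N, fun n hn k hk => ?_⟩
    simp only [hXdef, dif_pos hk]
    exact hN n hn ⟨k, hk⟩
  set G : ℕ → ℝ → ℝ := fun n t =>
    g (X n ⌊(d n : ℝ) / (b - a) * t - (d n : ℝ) / (b - a) * a⌋₊) with hG
  have hGmeas : ∀ n, Measurable (G n) := fun n =>
    (measurable_from_nat (f := fun k => g (X n k))).comp
      (Nat.measurable_floor.comp (by fun_prop))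
  have hGbd : ∀ n t, ‖G n t‖ ≤ C := fun n t => hC _ (hXmem n _)
  have hlim : ∀ᵐ t ∂(volume.restrict (Set.Ioc a b)),
      Tendsto (fun n => G n t) atTop (nhds (g t)) := by
    rw [← restrict_Ioo_eq_restrict_Ioc]
    filter_upwards [ae_restrict_of_ae_restrict_of_subset Set.Ioo_subset_Icc_self hg,
      ae_restrict_mem measurableSet_Ioo] with t hct ht
    exact hct.tendsto.comp (tendsto_nhdsWithin_iff.2
      ⟨tendsto_grid_point hab hd hXau ht, Eventually.of_forall fun n => hXmem n _⟩)
  have hgmeas : AEStronglyMeasurable g (volume.restrict (Set.Ioc a b)) :=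
    aestronglyMeasurable_of_tendsto_ae atTop
      (fun n => (hGmeas n).aestronglyMeasurable) hlim
  have hint : IntegrableOn g (Set.Ioc a b) := by
    refine Integrable.of_bound hgmeas C ?_
    filter_upwards [ae_restrict_mem measurableSet_Ioc] with t ht
    exact hC t (Set.Ioc_subset_Icc_self ht)
  refine ⟨hint, ?_⟩
  have hconv : Tendsto (fun n => ∫ t in a..b, G n t) atTop (nhds (∫ t in a..b, g t)) := by
    simp only [intervalIntegral.integral_of_le hab.le]
    refine tendsto_integral_of_dominated_convergence (fun _ => C)
      (fun n => (hGmeas n).aestronglyMeasurable) (integrableOn_const (by simp))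
      (fun n => Eventually.of_forall (hGbd n)) hlim
  refine (hconv.div_const (b - a)).congr' ?_
  filter_upwards [hd.eventually_gt_atTop 0] with n hn
  have hsum : ∑ k ∈ Finset.range (d n), g (X n k) = ∑ i, g (x n i) := by
    rw [← Fin.sum_univ_eq_sum_range (fun k => g (X n k))]
    exact Finset.sum_congr rfl fun i _ => by simp [hXdef]
  rw [hG, integral_step hab hn (fun k => g (X n k)), hsum]
  field_simp

/-! ### Ramp test functions and the essential range -/

/-- The continuous ramp equal to `1` on `(-∞, c - δ]` and to `0` on `[c, ∞)`. -/
noncomputable def ramp (δ c t : ℝ) : ℝ := max 0 (min 1 ((c - t) / δ))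

lemma continuous_ramp (δ c : ℝ) : Continuous (ramp δ c) := by
  unfold ramp; fun_prop

lemma ramp_nonneg (δ c t : ℝ) : 0 ≤ ramp δ c t := le_max_left _ _

lemma ramp_le_one (δ c t : ℝ) : ramp δ c t ≤ 1 :=
  max_le zero_le_one (min_le_left _ _)

lemma abs_ramp_le_one (δ c t : ℝ) : |ramp δ c t| ≤ 1 := by
  rw [abs_of_nonneg (ramp_nonneg δ c t)]; exact ramp_le_one δ c t

lemma ramp_eq_one {δ c t : ℝ} (hδ : 0 < δ) (h : t ≤ c - δ) : ramp δ c t = 1 := by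
  have : 1 ≤ (c - t) / δ := (one_le_div hδ).2 (by linarith)
  simp [ramp, min_eq_left this]

lemma ramp_eq_zero {δ c t : ℝ} (hδ : 0 < δ) (h : c ≤ t) : ramp δ c t = 0 := by
  have : (c - t) / δ ≤ 0 := div_nonpos_of_nonpos_of_nonneg (by linarith) hδ.le
  exact max_eq_left ((min_le_right _ _).trans this)

lemma ramp_le_ramp {δ c c' : ℝ} (hδ : 0 < δ) (h : c ≤ c') (t : ℝ) :
    ramp δ c t ≤ ramp δ c' t := by
  unfold ramp; gcongr

lemma ramp_lt_ramp {δ z t : ℝ} (hδ : 0 < δ) (h : |t - z| < δ) :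
    ramp δ z t < ramp δ (z + δ) t := by
  obtain ⟨h1, h2⟩ := abs_lt.1 h
  rcases le_total t z with htz | htz
  · rw [ramp_eq_one (c := z + δ) hδ (by linarith)]
    refine max_lt zero_lt_one ((min_le_right _ _).trans_lt ?_)
    rw [div_lt_one hδ]; linarith
  · rw [ramp_eq_zero (c := z) hδ htz]
    exact lt_max_of_lt_right (lt_min zero_lt_one (div_pos (by linarith) hδ))

/-- A value `z` of the essential range carries positive mass, which separates the means of the
two consecutive ramps `ramp δ z ≤ ramp δ (z + δ)`. -/
lemma integral_ramp_lt {a b : ℝ} (hab : a < b) {f : ℝ → ℝ} {δ z : ℝ} (hδ : 0 < δ)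
    (hint : ∀ c, IntegrableOn (fun t => ramp δ c (f t)) (Set.Ioc a b))
    (hz : z ∈ essRangeR f (Set.Icc a b)) :
    ∫ t in a..b, ramp δ z (f t) < ∫ t in a..b, ramp δ (z + δ) (f t) := by
  simp only [intervalIntegral.integral_of_le hab.le]
  rw [← sub_pos, ← integral_sub (hint _) (hint _),
    setIntegral_pos_iff_support_of_nonneg_ae
      (Eventually.of_forall fun t => sub_nonneg.2 (ramp_le_ramp hδ (by linarith) (f t)))
      ((hint _).sub (hint _))]
  have hpos : 0 < volume ({t ∈ Set.Icc a b | |f t - z| < δ} \ {a}) := by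
    rw [measure_sdiff_null (by simp)]
    exact hz δ hδ
  refine hpos.trans_le (measure_mono ?_)
  rintro t ⟨⟨ht, htz⟩, hta⟩
  refine ⟨?_, lt_of_le_of_ne ht.1 (Ne.symm hta), ht.2⟩
  exact (sub_pos.2 (ramp_lt_ramp hδ htz)).ne'

/-! ### Comparison of sorted samples -/

/-- If two sorted sequences of samples have the same limiting ramp averages, and consecutive
ramp averages are separated at every level of `[m, M]`, then for large `n` no entry of the second
sequence exceeds the matching entry of the first one by `8 * δ`.  The samples may leave `[m, M]`
by at most `δ` on the relevant side.  A violation at index `i` leaves a level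
`z` of the lattice `δ ℤ` in the gap; there `ramp δ z` sums to at least `i + 1` over `lo` whereas
`ramp δ (z + δ)` sums to at most `i` over `hi`. -/
lemma eventually_lt_add {m M δ : ℝ} (hδ : 0 < δ) {d : ℕ → ℕ} (hd : Tendsto d atTop atTop)
    {lo hi : (n : ℕ) → Fin (d n) → ℝ} {I : ℝ → ℝ}
    (hlo : ∀ c, Tendsto (fun n => (∑ i, ramp δ c (lo n i)) / (d n : ℝ)) atTop (nhds (I c)))
    (hhi : ∀ c, Tendsto (fun n => (∑ i, ramp δ c (hi n i)) / (d n : ℝ)) atTop (nhds (I c)))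
    (hI : ∀ z ∈ Set.Icc m M, I z < I (z + δ))
    (hlom : ∀ n, Monotone (lo n)) (hhim : ∀ n, Monotone (hi n))
    (hlo_ge : ∀ᶠ n in atTop, ∀ i, m - δ ≤ lo n i)
    (hhi_le : ∀ᶠ n in atTop, ∀ i, hi n i ≤ M + δ) :
    ∀ᶠ n in atTop, ∀ i, hi n i < lo n i + 8 * δ := by
  have hsep : ∀ᶠ n in atTop, ∀ k ∈ Finset.Icc ⌈m / δ⌉ ⌊M / δ⌋,
      (∑ i, ramp δ (δ * k) (lo n i)) / (d n : ℝ)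
        < (∑ i, ramp δ (δ * k + δ) (hi n i)) / (d n : ℝ) := by
    rw [Filter.eventually_all_finset]
    intro k hk
    obtain ⟨h1, h2⟩ := Finset.mem_Icc.1 hk
    have h1' : m ≤ δ * k := by
      have := Int.ceil_le.1 h1
      rw [div_le_iff₀ hδ] at this; linarith
    have h2' : δ * k ≤ M := by
      have := Int.le_floor.1 h2
      rw [le_div_iff₀ hδ] at this; linarith
    exact (hlo _).eventually_lt (hhi _) (hI _ ⟨h1', h2'⟩)
  filter_upwards [hsep, hlo_ge, hhi_le, hd.eventually_gt_atTop 0] with n hsep hlo_ge hhi_le hn i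
  by_contra hcon
  have hcon : lo n i + 8 * δ ≤ hi n i := not_lt.1 hcon
  have hm := hlo_ge i
  have hM := hhi_le i
  -- a lattice level inside the gap, at distance at least `2 * δ` from both ends
  set k : ℤ := ⌈(lo n i + 2 * δ) / δ⌉ with hk
  have hk1 : lo n i + 2 * δ ≤ δ * k := by
    have := Int.le_ceil ((lo n i + 2 * δ) / δ)
    rw [div_le_iff₀ hδ] at this; linarith
  have hk2 : δ * k < lo n i + 3 * δ := by
    have := Int.ceil_lt_add_one ((lo n i + 2 * δ) / δ)
    have h3 : (lo n i + 2 * δ) / δ * δ = lo n i + 2 * δ := by field_simp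
    nlinarith
  have hkmem : k ∈ Finset.Icc ⌈m / δ⌉ ⌊M / δ⌋ := by
    refine Finset.mem_Icc.2 ⟨Int.ceil_le.2 ?_, Int.le_floor.2 ?_⟩
    · rw [div_le_iff₀ hδ]; linarith
    · rw [le_div_iff₀ hδ]; linarith
  have hlt := hsep k hkmem
  rw [div_lt_div_iff_of_pos_right (by exact_mod_cast hn)] at hlt
  have hlow : ((i : ℕ) : ℝ) + 1 ≤ ∑ j, ramp δ (δ * k) (lo n j) := by
    calc ((i : ℕ) : ℝ) + 1 = ∑ j ∈ Finset.Iic i, (1 : ℝ) := by simp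
      _ ≤ ∑ j ∈ Finset.Iic i, ramp δ (δ * k) (lo n j) := by
        refine Finset.sum_le_sum fun j hj => ?_
        have := hlom n (Finset.mem_Iic.1 hj)
        rw [ramp_eq_one hδ (by linarith)]
      _ ≤ ∑ j, ramp δ (δ * k) (lo n j) :=
        Finset.sum_le_sum_of_subset_of_nonneg (Finset.subset_univ _)
          fun j _ _ => ramp_nonneg _ _ _
  have hupp : ∑ j, ramp δ (δ * k + δ) (hi n j) ≤ ((i : ℕ) : ℝ) := by
    calc ∑ j, ramp δ (δ * k + δ) (hi n j)
        = ∑ j ∈ Finset.Iio i, ramp δ (δ * k + δ) (hi n j) := by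
          refine (Finset.sum_subset (Finset.subset_univ _) fun j _ hj => ?_).symm
          have := hhim n (not_lt.1 fun h => hj (Finset.mem_Iio.2 h))
          exact ramp_eq_zero hδ (by linarith)
      _ ≤ ∑ j ∈ Finset.Iio i, (1 : ℝ) := Finset.sum_le_sum fun j _ => ramp_le_one _ _ _
      _ = ((i : ℕ) : ℝ) := by simp
  linarith

/-! ### Averages along `lam` and the conclusion -/

/-- Averages of any continuous real test function converge along `lam`: on a bounded range the
test function may be cut off to one of compact support. -/
lemma tendsto_average_of_compactSupport {a b : ℝ} (hab : a < b) {f : ℝ → ℝ} {R : ℝ}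
    (hf : ∀ t ∈ Set.Icc a b, |f t| ≤ R) {d : ℕ → ℕ} {lam : (n : ℕ) → Fin (d n) → ℝ}
    (hdist : ∀ F : ℂ → ℂ, Continuous F → HasCompactSupport F →
      Tendsto (fun n : ℕ => (∑ i : Fin (d n), F ((lam n i : ℝ) : ℂ)) / ((d n : ℕ) : ℂ)) atTop
        (nhds ((∫ x in a..b, F ((f x : ℝ) : ℂ)) / ((b - a : ℝ) : ℂ))))
    (hlam : ∀ᶠ n in atTop, ∀ i, |lam n i| ≤ R) {φ : ℝ → ℝ} (hφ : Continuous φ) :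
    Tendsto (fun n => (∑ i, φ (lam n i)) / (d n : ℝ)) atTop
      (nhds ((∫ t in a..b, φ (f t)) / (b - a))) := by
  set F : ℂ → ℂ := fun w => ((φ w.re * max 0 (min 1 (R + 1 - ‖w‖)) : ℝ) : ℂ) with hF
  have hFc : Continuous F := by
    have := Complex.continuous_re
    simp only [hF]
    fun_prop
  have hFs : HasCompactSupport F := by
    refine HasCompactSupport.of_support_subset_isCompact
      (isCompact_closedBall (0 : ℂ) (R + 1)) fun w hw => ?_
    rw [mem_closedBall_zero_iff]
    by_contra hcon
    refine hw ?_
    have : max 0 (min 1 (R + 1 - ‖w‖)) = 0 :=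
      max_eq_left ((min_le_right _ _).trans (by linarith))
    simp only [hF, this, mul_zero, Complex.ofReal_zero]
  have hFeq : ∀ t : ℝ, |t| ≤ R → F t = ((φ t : ℝ) : ℂ) := by
    intro t ht
    have : max 0 (min 1 (R + 1 - ‖(t : ℂ)‖)) = 1 := by
      rw [Complex.norm_real, Real.norm_eq_abs, min_eq_left (by linarith)]
      exact max_eq_right zero_le_one
    simp only [hF, this, mul_one, Complex.ofReal_re]
  have hlim := hdist F hFc hFs
  have hint : ∫ t in a..b, F ((f t : ℝ) : ℂ) = ((∫ t in a..b, φ (f t) : ℝ) : ℂ) := by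
    rw [← intervalIntegral.integral_ofReal]
    refine intervalIntegral.integral_congr fun t ht => ?_
    rw [Set.uIcc_of_le hab.le] at ht
    exact hFeq _ (hf t ht)
  rw [hint, ← Complex.ofReal_div] at hlim
  have hre := (Complex.continuous_re.tendsto _).comp hlim
  rw [Complex.ofReal_re] at hre
  refine hre.congr' ?_
  filter_upwards [hlam] with n hn
  have : (∑ i, F ((lam n i : ℝ) : ℂ)) / ((d n : ℕ) : ℂ)
      = (((∑ i, φ (lam n i)) / (d n : ℝ) : ℝ) : ℂ) := by
    rw [Finset.sum_congr rfl fun i _ => hFeq _ (hn i)]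
    push_cast; rfl
  simp only [Function.comp, this, Complex.ofReal_re]

/-- Let `f : [a,b] → ℝ` be bounded and continuous a.e. with essential
range `[inf f, sup f]`, and let `{Λ_n}` be multisets of reals with `{Λ_n} ∼ f` and
`Λ_n ⊆ [inf f - ε_n, sup f + ε_n]`, `ε_n → 0`.  Then for every asymptotically uniform grid
in `[a,b]`, if `σ_n, τ_n` sort the sampled values and the `λ`'s increasingly, the maximal
difference of the matched sorted vectors tends to `0`; in particular
`min_τ max_i |f(x_{i,n}) - λ_{τ(i),n}| → 0`. -/
theorem stmt16
    (a b : ℝ) (hab : a < b) (f : ℝ → ℝ)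
    (hf_bdd : ∃ C : ℝ, ∀ x ∈ Set.Icc a b, |f x| ≤ C)
    (hf_cae : ∀ᵐ x ∂(volume.restrict (Set.Icc a b)),
      ContinuousWithinAt f (Set.Icc a b) x)
    (hER : essRangeR f (Set.Icc a b)
      = Set.Icc (sInf (f '' Set.Icc a b)) (sSup (f '' Set.Icc a b)))
    (d : ℕ → ℕ) (hd : Tendsto d atTop atTop)
    (lam : (n : ℕ) → Fin (d n) → ℝ)
    (hdist : ∀ F : ℂ → ℂ, Continuous F → HasCompactSupport F →
      Tendsto (fun n : ℕ => (∑ i : Fin (d n), F ((lam n i : ℝ) : ℂ)) / ((d n : ℕ) : ℂ)) atTop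
        (nhds ((∫ x in a..b, F ((f x : ℝ) : ℂ)) / ((b - a : ℝ) : ℂ))))
    (eps : ℕ → ℝ) (heps : Tendsto eps atTop (nhds 0))
    (hloc : ∀ n : ℕ, ∀ i : Fin (d n),
      lam n i ∈ Set.Icc (sInf (f '' Set.Icc a b) - eps n) (sSup (f '' Set.Icc a b) + eps n))
    (x : (n : ℕ) → Fin (d n) → ℝ)
    (hx_mem : ∀ n : ℕ, ∀ i : Fin (d n), x n i ∈ Set.Icc a b)
    (hx_au : ∀ ε > (0:ℝ), ∃ N : ℕ, ∀ n ≥ N, ∀ i : Fin (d n),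
      |x n i - (a + ((i : ℕ) + 1) * (b - a) / (d n + 1))| < ε) :
    (∀ σ τ : (n : ℕ) → Equiv.Perm (Fin (d n)),
      (∀ n : ℕ, Monotone fun i : Fin (d n) => f (x n (σ n i))) →
      (∀ n : ℕ, Monotone fun i : Fin (d n) => lam n (τ n i)) →
      ∀ ε > (0:ℝ), ∃ N : ℕ, ∀ n ≥ N, ∀ i : Fin (d n),
        |f (x n (σ n i)) - lam n (τ n i)| < ε) ∧
    (∀ ε > (0:ℝ), ∃ N : ℕ, ∀ n ≥ N, ∃ τ : Equiv.Perm (Fin (d n)), ∀ i : Fin (d n),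
      |f (x n i) - lam n (τ i)| < ε) := by
  obtain ⟨C, hC⟩ := hf_bdd
  set m := sInf (f '' Set.Icc a b) with hm
  set M := sSup (f '' Set.Icc a b) with hM
  have hbelow : BddBelow (f '' Set.Icc a b) :=
    ⟨-C, by rintro _ ⟨t, ht, rfl⟩; exact (abs_le.1 (hC t ht)).1⟩
  have habove : BddAbove (f '' Set.Icc a b) :=
    ⟨C, by rintro _ ⟨t, ht, rfl⟩; exact (abs_le.1 (hC t ht)).2⟩
  have hmf : ∀ t ∈ Set.Icc a b, m ≤ f t := fun t ht => csInf_le hbelow ⟨t, ht, rfl⟩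
  have hfM : ∀ t ∈ Set.Icc a b, f t ≤ M := fun t ht => le_csSup habove ⟨t, ht, rfl⟩
  have heps_lt : ∀ δ > (0:ℝ), ∀ᶠ n in atTop, eps n < δ := fun δ hδ => heps.eventually_lt_const hδ
  set R := max C (max (-(m - 1)) (M + 1)) with hR
  have hfR : ∀ t ∈ Set.Icc a b, |f t| ≤ R := fun t ht => (hC t ht).trans (le_max_left _ _)
  have hlamR : ∀ᶠ n in atTop, ∀ i, |lam n i| ≤ R := by
    filter_upwards [heps_lt 1 one_pos] with n hn i
    have h1 : -(m - 1) ≤ R := (le_max_left _ _).trans (le_max_right _ _)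
    have h2 : M + 1 ≤ R := (le_max_right _ _).trans (le_max_right _ _)
    have h3 := hloc n i
    exact abs_le.2 ⟨by linarith [h3.1], by linarith [h3.2]⟩
  have hgrid : ∀ δ c : ℝ, IntegrableOn (fun t => ramp δ c (f t)) (Set.Ioc a b) ∧
      Tendsto (fun n => (∑ i, ramp δ c (f (x n i))) / (d n : ℝ)) atTop
        (nhds ((∫ t in a..b, ramp δ c (f t)) / (b - a))) := fun δ c =>
    integrableOn_and_tendsto_grid_average hab (g := fun t => ramp δ c (f t)) (C := 1)
      (fun t _ => abs_ramp_le_one δ c (f t))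
      (hf_cae.mono fun t ht => (continuous_ramp δ c).continuousAt.comp_continuousWithinAt ht)
      hd hx_mem hx_au
  have hlam : ∀ δ c : ℝ, Tendsto (fun n => (∑ i, ramp δ c (lam n i)) / (d n : ℝ)) atTop
        (nhds ((∫ t in a..b, ramp δ c (f t)) / (b - a))) := fun δ c =>
    tendsto_average_of_compactSupport hab hfR hdist hlamR (continuous_ramp δ c)
  have main : ∀ σ τ : (n : ℕ) → Equiv.Perm (Fin (d n)),
      (∀ n : ℕ, Monotone fun i : Fin (d n) => f (x n (σ n i))) →
      (∀ n : ℕ, Monotone fun i : Fin (d n) => lam n (τ n i)) →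
      ∀ ε > (0:ℝ), ∃ N : ℕ, ∀ n ≥ N, ∀ i : Fin (d n),
        |f (x n (σ n i)) - lam n (τ n i)| < ε := by
    intro σ τ hσ hτ ε hε
    set δ := ε / 8 with hδdef
    have hδ : 0 < δ := by positivity
    have hI : ∀ z ∈ Set.Icc m M, (∫ t in a..b, ramp δ z (f t)) / (b - a)
        < (∫ t in a..b, ramp δ (z + δ) (f t)) / (b - a) := fun z hz =>
      div_lt_div_of_pos_right
        (integral_ramp_lt hab hδ (fun c => (hgrid δ c).1) (hER ▸ hz)) (sub_pos.2 hab)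
    have hfs : ∀ c, Tendsto (fun n => (∑ i, ramp δ c (f (x n (σ n i)))) / (d n : ℝ)) atTop
        (nhds ((∫ t in a..b, ramp δ c (f t)) / (b - a))) := fun c =>
      (hgrid δ c).2.congr fun n => by
        rw [Equiv.sum_comp (σ n) (fun i => ramp δ c (f (x n i)))]
    have hls : ∀ c, Tendsto (fun n => (∑ i, ramp δ c (lam n (τ n i))) / (d n : ℝ)) atTop
        (nhds ((∫ t in a..b, ramp δ c (f t)) / (b - a))) := fun c =>
      (hlam δ c).congr fun n => by
        rw [Equiv.sum_comp (τ n) (fun i => ramp δ c (lam n i))]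
    have h1 := eventually_lt_add hδ hd hfs hls hI hσ hτ
      (Eventually.of_forall fun n i => by linarith [hmf _ (hx_mem n (σ n i))])
      ((heps_lt δ hδ).mono fun n hn i => by linarith [(hloc n (τ n i)).2])
    have h2 := eventually_lt_add hδ hd hls hfs hI hτ hσ
      ((heps_lt δ hδ).mono fun n hn i => by linarith [(hloc n (τ n i)).1])
      (Eventually.of_forall fun n i => by linarith [hfM _ (hx_mem n (σ n i))])
    obtain ⟨N, hN⟩ := eventually_atTop.1 (h1.and h2)
    refine ⟨N, fun n hn i => abs_lt.2 ⟨?_, ?_⟩⟩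
    · linarith [(hN n hn).1 i]
    · linarith [(hN n hn).2 i]
  refine ⟨main, fun ε hε => ?_⟩
  obtain ⟨N, hN⟩ := main (fun n => Tuple.sort fun i => f (x n i)) (fun n => Tuple.sort (lam n))
    (fun n => Tuple.monotone_sort fun i => f (x n i)) (fun n => Tuple.monotone_sort (lam n)) ε hε
  refine ⟨N, fun n hn =>
    ⟨(Tuple.sort fun i => f (x n i)).symm.trans (Tuple.sort (lam n)), fun i => ?_⟩⟩
  simpa using hN n hn ((Tuple.sort fun i => f (x n i)).symm i)
end
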